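/- arXiv:1806.06090 — 2 statements merged into one kernel-verified Lean document; each statement's English description precedes it below -/
import Mathlib

section
/- A finite group G has exactly |G| − 3 cyclic subgroups if and only if G is isomorphic to Q_8, C_5, or D_10. -/
/-!
A cyclic group of order `n` has `φ n` generators, so `|G| = ∑ φ |H|` over the cyclic subgroups `H`,
and `G` has `|G| - 3` of them exactly when `∑ (φ |H| - 1) = 3`. Only those with `|H| > 2`
contribute, and they contribute odd numbers: either there is a single one, with `φ |H| = 4`, or
there are three, each with `φ |H| = 2`.

In the first case `|H| = 5`, and every element outside `H` is an involution inverting `H`, whence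
`C₅` or `D₁₀`.

In the second case exactly six elements have nontrivial square, and `G` permutes the three subgroups
by conjugation. An element of order `3` would fix its own span, hence all three subgroups, hence
commute with all six elements; counting involutions in its centralizer excludes this. So `G` is a
`2`-group and fixes one of the three subgroups, `⟨a⟩` with `a` of order `4`. The same counting
yields `t` with `t² ≠ 1` inverting `a`; then the six elements are `a`, `a⁻¹` and the coset `t⟨a⟩`,
which forces `G = ⟨a, t⟩` and `t² = a²`, that is `Q₈`.
-/

open Subgroup
open scoped Pointwise Nat

theorem exists_eq_singleton_or_card_eq_three_of_sum_odd_eq_three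
    {ι : Type*} {s : Finset ι} {f : ι → ℕ}
    (hodd : ∀ i ∈ s, Odd (f i)) (hsum : ∑ i ∈ s, f i = 3) :
    (∃ i, s = {i} ∧ f i = 3) ∨ (s.card = 3 ∧ ∀ i ∈ s, f i = 1) := by
  have one_le : ∀ i ∈ s, 1 ≤ f i := fun i hi ↦ (hodd i hi).pos
  have card_le : s.card ≤ 3 := by
    simpa [hsum] using s.card_nsmul_le_sum f 1 one_le
  have card_odd : Odd s.card := by
    have := Finset.odd_sum_iff_odd_card_odd (s := s) f
    rw [hsum, Finset.filter_true_of_mem hodd] at this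
    exact this.1 (by decide)
  obtain hcard | hcard : s.card = 1 ∨ s.card = 3 := by grind
  · obtain ⟨i, rfl⟩ := Finset.card_eq_one.1 hcard
    exact .inl ⟨i, rfl, by simpa using hsum⟩
  · refine .inr ⟨hcard, fun i hi ↦ ?_⟩
    have := (Finset.sum_eq_sum_iff_of_le one_le).1 (by simp [hcard, hsum])
    exact (this i hi).symm

section

variable {G : Type*} [Group G]

theorem card_zpowers_eq (H : Subgroup G) [Finite H] [IsCyclic H] :
    Nat.card {x : G // zpowers x = H} = φ (Nat.card H) := by
  classical
  let e : {x : G // zpowers x = H} ≃ {h : H // orderOf h = Nat.card H} :=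
    { toFun := fun ⟨x, hx⟩ ↦ ⟨⟨x, hx.le (mem_zpowers x)⟩, by
        rw [Subgroup.orderOf_mk, ← Nat.card_zpowers, hx]⟩
      invFun := fun ⟨h, hh⟩ ↦ ⟨h, Subgroup.eq_of_le_of_card_ge (zpowers_le.2 h.2) (by
        rw [Nat.card_zpowers, Subgroup.orderOf_coe, hh])⟩
      left_inv := fun _ ↦ rfl
      right_inv := fun _ ↦ rfl }
  have := Fintype.ofFinite H
  rw [Nat.card_congr e, Nat.card_eq_fintype_card, Fintype.card_subtype, Nat.card_eq_fintype_card]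
  exact IsCyclic.card_orderOf_eq_totient dvd_rfl

theorem card_zpowers_mem [Finite G] (S : Finset (Subgroup G)) (hS : ∀ H ∈ S, IsCyclic H) :
    Nat.card {x : G // zpowers x ∈ S} = ∑ H ∈ S, φ (Nat.card H) := by
  have fibers := Equiv.sigmaSubtypeFiberEquivSubtype (zpowers : G → Subgroup G) (q := (· ∈ S))
    fun _ ↦ Iff.rfl
  rw [← Nat.card_congr fibers, Nat.card_sigma, ← S.sum_coe_sort]
  exact Finset.sum_congr rfl fun H _ ↦ have := hS H H.2; card_zpowers_eq H.1

theorem card_isCyclic_add_sum_totient_sub_one [Finite G] {S : Finset (Subgroup G)}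
    (hS : ∀ H, H ∈ S ↔ IsCyclic H ∧ 2 < Nat.card H) :
    Nat.card {H : Subgroup G // IsCyclic H} + ∑ H ∈ S, (φ (Nat.card H) - 1) = Nat.card G := by
  classical
  have := Fintype.ofFinite (Subgroup G)
  let cyclic : Finset (Subgroup G) := {H | IsCyclic H}
  have card_eq : Nat.card G = ∑ H ∈ cyclic, φ (Nat.card H) := by
    rw [← card_zpowers_mem cyclic (by simp [cyclic])]
    refine (Nat.card_congr (Equiv.subtypeUnivEquiv fun x ↦ ?_)).symm
    exact Finset.mem_filter_univ _ |>.2 inferInstance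
  have sum_eq : ∑ H ∈ S, (φ (Nat.card H) - 1) = ∑ H ∈ cyclic, (φ (Nat.card H) - 1) := by
    refine Finset.sum_subset (fun H hH ↦ by simpa [cyclic] using ((hS H).1 hH).1) fun H hH hHS ↦ ?_
    have card_le : Nat.card H ≤ 2 := by
      by_contra! h
      exact hHS ((hS H).2 ⟨by simpa [cyclic] using hH, h⟩)
    have card_pos : 0 < Nat.card H := Nat.card_pos
    interval_cases Nat.card H <;> rfl
  rw [sum_eq, Nat.card_eq_fintype_card, Fintype.card_subtype, Finset.card_eq_sum_ones,
    ← Finset.sum_add_distrib, card_eq]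
  exact Finset.sum_congr rfl fun H _ ↦ Nat.add_sub_cancel' (Nat.totient_pos.2 Nat.card_pos)

/-- The cyclic subgroups with more than two elements, equivalently with more than one generator, as
a set on which `G` acts by conjugation. -/
def largeCyclic (G : Type*) [Group G] : SubMulAction (ConjAct G) (Subgroup G) where
  carrier := {H | IsCyclic H ∧ 2 < Nat.card H}
  smul_mem' g H hH := by
    let e := Subgroup.equivSMul g H
    exact ⟨e.isCyclic.1 hH.1, Nat.card_congr e.toEquiv ▸ hH.2⟩

theorem mem_largeCyclic {H : Subgroup G} :
    H ∈ largeCyclic G ↔ IsCyclic H ∧ 2 < Nat.card H := Iff.rfl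

theorem orderOf_le_two_iff [Finite G] {x : G} : orderOf x ≤ 2 ↔ x ^ 2 = 1 := by
  have := orderOf_pos x
  rw [← orderOf_dvd_iff_pow_eq_one, Nat.dvd_prime Nat.prime_two]
  omega

theorem zpowers_mem_largeCyclic [Finite G] {x : G} : zpowers x ∈ largeCyclic G ↔ x ^ 2 ≠ 1 := by
  rw [mem_largeCyclic, Nat.card_zpowers, ne_eq, ← orderOf_le_two_iff, not_le]
  exact and_iff_right inferInstance

theorem forall_largeCyclic_eq_or_card_largeCyclic_eq_three [Finite G]
    (h : Nat.card {H : Subgroup G // IsCyclic H} + 3 = Nat.card G) :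
    (∃ a : G, φ (orderOf a) = 4 ∧ ∀ H ∈ largeCyclic G, H = zpowers a) ∨
      (Nat.card (largeCyclic G) = 3 ∧ ∀ x : G, φ (orderOf x) ≤ 2) := by
  have finite := Set.toFinite (largeCyclic G : Set (Subgroup G))
  have mem_S (H : Subgroup G) : H ∈ finite.toFinset ↔ IsCyclic H ∧ 2 < Nat.card H :=
    finite.mem_toFinset
  have sum_eq : ∑ H ∈ finite.toFinset, (φ (Nat.card H) - 1) = 3 := by
    have := card_isCyclic_add_sum_totient_sub_one mem_S
    omega
  have odd (H) (hH : H ∈ finite.toFinset) : Odd (φ (Nat.card H) - 1) :=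
    Nat.Even.sub_odd (Nat.totient_pos.2 Nat.card_pos) (Nat.totient_even ((mem_S H).1 hH).2) odd_one
  obtain ⟨H, hS, hH⟩ | ⟨hcard, hφ⟩ :=
    exists_eq_singleton_or_card_eq_three_of_sum_odd_eq_three odd sum_eq
  · left
    have hHS := hS.ge (Finset.mem_singleton_self H)
    obtain ⟨a, rfl⟩ := (Subgroup.isCyclic_iff_exists_zpowers_eq_top H).1 ((mem_S H).1 hHS).1
    rw [Nat.card_zpowers] at hH
    exact ⟨a, by omega, fun K hK ↦ Finset.mem_singleton.1 (hS ▸ (mem_S K).2 hK)⟩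
  · refine .inr ⟨?_, fun x ↦ ?_⟩
    · rw [← hcard]
      exact Nat.card_eq_card_finite_toFinset finite
    · by_cases hx : x ^ 2 = 1
      · have := orderOf_le_two_iff.2 hx
        have := Nat.totient_le (orderOf x)
        omega
      · have := hφ _ ((finite.mem_toFinset).2 (zpowers_mem_largeCyclic.2 hx))
        rw [Nat.card_zpowers] at this
        omega

theorem card_sq_ne_one_eq_six [Finite G] (hT : Nat.card (largeCyclic G) = 3)
    (hφ : ∀ x : G, φ (orderOf x) ≤ 2) : Nat.card {x : G // x ^ 2 ≠ 1} = 6 := by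
  have finite := Set.toFinite (largeCyclic G : Set (Subgroup G))
  have mem_S (H : Subgroup G) : H ∈ finite.toFinset ↔ H ∈ largeCyclic G := finite.mem_toFinset
  have totient_eq (H) (hH : H ∈ finite.toFinset) : φ (Nat.card H) = 2 := by
    obtain ⟨hcyc, hcard⟩ := (mem_S H).1 hH
    obtain ⟨a, rfl⟩ := (Subgroup.isCyclic_iff_exists_zpowers_eq_top H).1 hcyc
    have := Nat.totient_even hcard
    have := Nat.totient_pos.2 (zero_lt_two.trans hcard)
    have := hφ a
    rw [Nat.card_zpowers] at *
    grind
  calc Nat.card {x : G // x ^ 2 ≠ 1}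
      = Nat.card {x : G // zpowers x ∈ finite.toFinset} := by
        simp_rw [mem_S, zpowers_mem_largeCyclic]
    _ = ∑ H ∈ finite.toFinset, φ (Nat.card H) :=
        card_zpowers_mem _ fun H hH ↦ ((mem_S H).1 hH).1
    _ = 6 := by
        rw [Finset.sum_congr rfl totient_eq, Finset.sum_const,
          ← Nat.card_eq_card_finite_toFinset finite]
        exact congrArg (· * 2) hT

theorem exists_injective_zmod_hom {a : G} {n : ℕ} (ha : orderOf a = n) :
    ∃ e : Multiplicative (ZMod n) →* G, Function.Injective e ∧ e.range = zpowers a ∧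
      ∀ i : ℤ, e (.ofAdd i) = a ^ i := by
  let e := zmodMulEquivOfGenerator (g := (⟨a, mem_zpowers a⟩ : zpowers a))
    (fun ⟨_, k, hk⟩ ↦ ⟨k, Subtype.ext hk⟩) ((Nat.card_zpowers a).trans ha)
  refine ⟨(zpowers a).subtype.comp e.toMonoidHom, (zpowers a).subtype_injective.comp e.injective,
    ?_, fun i ↦ ?_⟩
  · have e_range : e.toMonoidHom.range = ⊤ := MonoidHom.range_eq_top.2 e.surjective
    rw [MonoidHom.range_comp, e_range, ← MonoidHom.range_eq_map, Subgroup.range_subtype]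
  · simp [e]

/-- The homomorphism from a dihedral group sending the rotations to the image of `e` by `e` and a
reflection to `x`. -/
def dihedralGroupHom {n : ℕ} (e : Multiplicative (ZMod n) →* G) (x : G) (hx : x ^ 2 = 1)
    (hxe : ∀ i, SemiconjBy x (e i) (e i)⁻¹) : DihedralGroup n →* G :=
  MonoidHom.mk'
    (fun
      | .r i => e (.ofAdd i)
      | .sr i => x * e (.ofAdd i))
    (by
      have mul_self : x * x = 1 := by rwa [← sq]
      have mul_swap (i) : e i * x = x * (e i)⁻¹ := by simpa using (hxe i⁻¹).eq.symm
      rintro (i | i) (j | j)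
      · simp
      · simp [sub_eq_neg_add, ← mul_assoc, mul_swap]
      · simp [mul_assoc]
      · simp [mul_assoc, sub_eq_neg_add, ← mul_assoc (e _) x, mul_swap, ← mul_assoc x x, mul_self])

/-- The homomorphism from a generalized quaternion group sending the cyclic subgroup of index two to
the image of `e` by `e`, and the remaining generator to `x`. -/
def quaternionGroupHom {n : ℕ} (e : Multiplicative (ZMod (2 * n)) →* G) (x : G)
    (hx : x ^ 2 = e (.ofAdd (n : ZMod (2 * n)))) (hxe : ∀ i, SemiconjBy x (e i) (e i)⁻¹) :
    QuaternionGroup n →* G :=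
  MonoidHom.mk'
    (fun
      | .a i => e (.ofAdd i)
      | .xa i => x * e (.ofAdd i))
    (by
      have mul_self : x * x = e (.ofAdd (n : ZMod (2 * n))) := by rwa [← sq]
      have mul_swap (i) : e i * x = x * (e i)⁻¹ := by simpa using (hxe i⁻¹).eq.symm
      rintro (i | i) (j | j)
      · simp
      · simp [sub_eq_neg_add, ← mul_assoc, mul_swap]
      · simp [mul_assoc]
      · rw [QuaternionGroup.xa_mul_xa, add_sub_assoc, sub_eq_neg_add]
        simp [mul_assoc, ← mul_assoc (e _) x, mul_swap, ← mul_assoc x x, mul_self])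

theorem semiconjBy_inv_of_mem_zpowers {a x y : G} (hxa : SemiconjBy x a a⁻¹)
    (hy : y ∈ zpowers a) : SemiconjBy x y y⁻¹ := by
  obtain ⟨k, rfl⟩ := hy
  simpa using hxa.zpow_right k

theorem nonempty_mulEquiv_dihedralGroup {n : ℕ} {a x : G} (ha : orderOf a = n) (hx : x ^ 2 = 1)
    (hxa : SemiconjBy x a a⁻¹) (hx_notMem : x ∉ zpowers a)
    (hG : ∀ g, g ∈ zpowers a ∨ x⁻¹ * g ∈ zpowers a) : Nonempty (G ≃* DihedralGroup n) := by
  obtain ⟨e, e_inj, e_range, -⟩ := exists_injective_zmod_hom ha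
  rw [← e_range] at hx_notMem
  simp_rw [← e_range] at hG
  let f := dihedralGroupHom e x hx fun i ↦
    semiconjBy_inv_of_mem_zpowers hxa (e_range.le ⟨i, rfl⟩)
  have f_inj : Function.Injective f := by
    refine (injective_iff_map_eq_one f).2 ?_
    rintro (i | i) hi
    · exact congrArg DihedralGroup.r (e_inj (hi.trans (map_one e).symm))
    · exact absurd (eq_inv_of_mul_eq_one_left hi ▸ inv_mem ⟨_, rfl⟩) hx_notMem
  have f_surj : Function.Surjective f := by
    intro g
    obtain ⟨i, hi⟩ | ⟨i, hi⟩ := hG g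
    · exact ⟨.r i.toAdd, hi⟩
    · exact ⟨.sr i.toAdd, mul_eq_of_eq_inv_mul hi⟩
  exact ⟨(MulEquiv.ofBijective f ⟨f_inj, f_surj⟩).symm⟩

theorem nonempty_mulEquiv_quaternionGroup {n : ℕ} {a x : G} (ha : orderOf a = 2 * n)
    (hx : x ^ 2 = a ^ n) (hxa : SemiconjBy x a a⁻¹) (hx_notMem : x ∉ zpowers a)
    (hG : ∀ g, g ∈ zpowers a ∨ x⁻¹ * g ∈ zpowers a) : Nonempty (G ≃* QuaternionGroup n) := by
  obtain ⟨e, e_inj, e_range, e_apply⟩ := exists_injective_zmod_hom ha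
  rw [← e_range] at hx_notMem
  simp_rw [← e_range] at hG
  have hx' : x ^ 2 = e (.ofAdd (n : ZMod (2 * n))) := by simpa [hx] using (e_apply n).symm
  let f := quaternionGroupHom e x hx' fun i ↦
    semiconjBy_inv_of_mem_zpowers hxa (e_range.le ⟨i, rfl⟩)
  have f_inj : Function.Injective f := by
    refine (injective_iff_map_eq_one f).2 ?_
    rintro (i | i) hi
    · exact congrArg QuaternionGroup.a (e_inj (hi.trans (map_one e).symm))
    · exact absurd (eq_inv_of_mul_eq_one_left hi ▸ inv_mem ⟨_, rfl⟩) hx_notMem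
  have f_surj : Function.Surjective f := by
    intro g
    obtain ⟨i, hi⟩ | ⟨i, hi⟩ := hG g
    · exact ⟨.a i.toAdd, hi⟩
    · exact ⟨.xa i.toAdd, mul_eq_of_eq_inv_mul hi⟩
  exact ⟨(MulEquiv.ofBijective f ⟨f_inj, f_surj⟩).symm⟩

theorem commute_mul_of_semiconjBy_inv {a x y : G} (hx : SemiconjBy x a a⁻¹)
    (hy : SemiconjBy y a a⁻¹) : Commute (x * y) a := by
  simpa [Commute] using hx.inv_right.mul_left hy

theorem semiconjBy_inv_of_sq_eq_one {a x : G} (hx : x ^ 2 = 1) (hxa : (x * a) ^ 2 = 1) :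
    SemiconjBy x a a⁻¹ := by
  rw [sq, mul_eq_one_iff_eq_inv] at hx hxa
  rw [SemiconjBy, hxa, mul_inv_rev, ← hx]

theorem nonempty_mulEquiv_zmod_or_dihedralGroup {n : ℕ} {a : G} (ha : orderOf a = n)
    (hsq : a ^ 2 ≠ 1) (hG : ∀ g ∉ zpowers a, g ^ 2 = 1) :
    Nonempty (G ≃* Multiplicative (ZMod n)) ∨ Nonempty (G ≃* DihedralGroup n) := by
  have inverts {g : G} (hg : g ∉ zpowers a) : SemiconjBy g a a⁻¹ :=
    semiconjBy_inv_of_sq_eq_one (hG g hg)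
      (hG _ (mt (Subgroup.mul_mem_cancel_right _ (mem_zpowers a)).1 hg))
  by_cases htop : ∀ g, g ∈ zpowers a
  · exact .inl ⟨(zmodMulEquivOfGenerator htop
      ((Nat.card_congr (Equiv.subtypeUnivEquiv htop)).symm.trans
        ((Nat.card_zpowers a).trans ha))).symm⟩
  · push Not at htop
    obtain ⟨x, hx⟩ := htop
    refine .inr (nonempty_mulEquiv_dihedralGroup ha (hG x hx) (inverts hx) hx fun g ↦ ?_)
    by_contra! ⟨hg, hxg⟩
    -- `g` centralizes `a`, as the product of `x` and `x⁻¹ * g`, which both invert it.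
    have centralizes : Commute g a := by
      simpa using commute_mul_of_semiconjBy_inv (inverts hx) (inverts hxg)
    have : a⁻¹ = a := mul_right_cancel ((inverts hg).eq.symm.trans centralizes.eq)
    exact hsq (by rw [sq, mul_eq_one_iff_eq_inv, this])

theorem eq_five_of_totient_eq_four {n : ℕ} (hφ : φ n = 4) (hn : ∀ d, d ∣ n → 2 < d → d = n) :
    n = 5 := by
  have two_lt : 2 < n := by
    by_contra! h
    interval_cases n <;> revert hφ <;> decide
  have divisors_subset : n.divisors ⊆ {1, 2, n} := by
    intro d hd
    have := hn d (Nat.dvd_of_mem_divisors hd)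
    have := Nat.pos_of_mem_divisors hd
    grind
  have le_six : n ≤ 6 := by
    calc n = ∑ d ∈ n.divisors, φ d := (Nat.sum_totient n).symm
      _ ≤ ∑ d ∈ {1, 2, n}, φ d := Finset.sum_le_sum_of_subset divisors_subset
      _ = φ 1 + (φ 2 + φ n) := by
        rw [Finset.sum_insert (by grind), Finset.sum_pair two_lt.ne]
      _ = 6 := by rw [hφ]; rfl
  interval_cases n <;> revert hφ <;> decide

theorem orderOf_eq_five [Finite G] {a : G} (hφ : φ (orderOf a) = 4)
    (ha : ∀ H ∈ largeCyclic G, H = zpowers a) : orderOf a = 5 := by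
  refine eq_five_of_totient_eq_four hφ fun d hd hlt ↦ ?_
  have order_eq : orderOf (a ^ (orderOf a / d)) = d :=
    orderOf_pow_orderOf_div (orderOf_pos a).ne' hd
  have := ha (zpowers (a ^ (orderOf a / d))) ⟨inferInstance, by rwa [Nat.card_zpowers, order_eq]⟩
  rw [← Nat.card_zpowers a, ← this, Nat.card_zpowers, order_eq]

theorem nonempty_mulEquiv_of_forall_largeCyclic_eq [Finite G] {a : G} (hφ : φ (orderOf a) = 4)
    (ha : ∀ H ∈ largeCyclic G, H = zpowers a) :
    Nonempty (G ≃* Multiplicative (ZMod 5)) ∨ Nonempty (G ≃* DihedralGroup 5) := by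
  have order_eq := orderOf_eq_five hφ ha
  refine nonempty_mulEquiv_zmod_or_dihedralGroup order_eq ?_ fun g hg ↦ ?_
  · rw [ne_eq, ← orderOf_le_two_iff]
    omega
  · by_contra hsq
    exact hg (ha _ (zpowers_mem_largeCyclic.2 hsq) ▸ mem_zpowers g)

theorem eq_or_eq_inv_of_zpowers_eq [Finite G] {a b : G} (hφ : φ (orderOf a) ≤ 2) (ha : a ^ 2 ≠ 1)
    (hab : zpowers b = zpowers a) : b = a ∨ b = a⁻¹ := by
  have ne_inv : a ≠ a⁻¹ := fun h ↦ ha (by rw [sq, mul_eq_one_iff_eq_inv, ← h])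
  have card_eq : {x : G | zpowers x = zpowers a}.ncard = φ (orderOf a) := by
    rw [← Nat.card_zpowers]
    exact card_zpowers_eq (zpowers a)
  have generators_eq : {a, a⁻¹} = {x : G | zpowers x = zpowers a} := by
    refine Set.eq_of_subset_of_ncard_le ?_ (by rwa [card_eq, Set.ncard_pair ne_inv])
    rintro _ (rfl | rfl)
    exacts [rfl, zpowers_inv]
  exact generators_eq.ge hab

theorem toConjAct_smul_zpowers (g a : G) :
    ConjAct.toConjAct g • zpowers a = zpowers (g * a * g⁻¹) :=
  MonoidHom.map_zpowers _ a

theorem commute_or_semiconjBy_inv [Finite G] {a g : G} (hφ : φ (orderOf a) ≤ 2) (ha : a ^ 2 ≠ 1)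
    (hg : ConjAct.toConjAct g • zpowers a = zpowers a) : Commute g a ∨ SemiconjBy g a a⁻¹ := by
  rw [toConjAct_smul_zpowers] at hg
  exact (eq_or_eq_inv_of_zpowers_eq hφ ha hg).imp mul_inv_eq_iff_eq_mul.1 mul_inv_eq_iff_eq_mul.1

theorem fixedPoints_eq_univ_of_card_eq_prime {P α : Type*} [Group P] [MulAction P α] {p : ℕ}
    [hp : Fact p.Prime] (hP : IsPGroup p P) (hα : Nat.card α = p)
    (hfix : (MulAction.fixedPoints P α).Nonempty) : MulAction.fixedPoints P α = Set.univ := by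
  have := Nat.finite_of_card_ne_zero (hα ▸ hp.out.ne_zero)
  have dvd : p ∣ (MulAction.fixedPoints P α).ncard :=
    (Nat.modEq_zero_iff_dvd.1 ((hP.card_modEq_card_fixedPoints α).symm.trans (by simp [hα])))
  refine Set.eq_of_subset_of_ncard_le (Set.subset_univ _) ?_
  rw [Set.ncard_univ, hα]
  exact Nat.le_of_dvd ((Set.ncard_pos (Set.toFinite _)).2 hfix) dvd

theorem card_sq_eq_one_add_card_sq_ne_one [Finite G] :
    Nat.card {x : G // x ^ 2 = 1} + Nat.card {x : G // x ^ 2 ≠ 1} = Nat.card G := by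
  classical
  rw [← Nat.card_sum, Nat.card_congr (Equiv.sumCompl _)]

theorem card_sq_eq_one_of_odd_card (hG : Odd (Nat.card G)) :
    Nat.card {x : G // x ^ 2 = 1} = 1 := by
  refine Nat.card_eq_one_iff_unique.2 ⟨⟨fun ⟨x, hx⟩ ⟨y, hy⟩ ↦ Subtype.ext ?_⟩, ⟨1, one_pow 2⟩⟩
  have eq_one {z : G} (hz : z ^ 2 = 1) : z = 1 := by
    rw [← orderOf_eq_one_iff]
    exact Nat.eq_one_of_dvd_coprimes hG.coprime_two_left (orderOf_dvd_of_pow_eq_one hz)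
      (orderOf_dvd_natCard z)
  exact (eq_one hx).trans (eq_one hy).symm

theorem orderOf_mul_card_sq_eq_one_le [Finite G] {a : G} (ha : a ∈ center G)
    (hodd : Odd (orderOf a)) : orderOf a * Nat.card {x : G // x ^ 2 = 1} ≤ Nat.card G := by
  obtain ⟨k, hk⟩ := hodd.add_odd odd_one
  have recover {p y : G} (hp : p ∈ zpowers a) (hy : y ^ 2 = 1) : (p * y) ^ (orderOf a + 1) = p := by
    have hpy : Commute p y := (mem_center_iff.1 (zpowers_le.2 ha hp) y).symm
    have hpa : p ^ orderOf a = 1 :=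
      orderOf_dvd_iff_pow_eq_one.1 (orderOf_dvd_of_mem_zpowers hp)
    have hyk : y ^ (orderOf a + 1) = 1 := by rw [hk, ← two_mul, pow_mul, hy, one_pow]
    rw [hpy.mul_pow, hyk, mul_one, pow_succ, hpa, one_mul]
  rw [← Nat.card_zpowers, ← Nat.card_prod]
  refine Nat.card_le_card_of_injective
    (fun z : zpowers a × {x : G // x ^ 2 = 1} ↦ (z.1 : G) * z.2) ?_
  rintro ⟨⟨p, hp⟩, y, hy⟩ ⟨⟨q, hq⟩, z, hz⟩ (h : p * y = q * z)
  obtain rfl : p = q := by rw [← recover hp hy, h, recover hq hz]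
  obtain rfl := mul_left_cancel h
  rfl

theorem card_sq_eq_one_le_card_sq_ne_one [Finite G] {a : G} (ha : a ∈ center G)
    (hsq : a ^ 2 ≠ 1) : Nat.card {x : G // x ^ 2 = 1} ≤ Nat.card {x : G // x ^ 2 ≠ 1} := by
  refine Nat.card_le_card_of_injective (fun y ↦ ⟨y * a, ?_⟩) fun y z h ↦ ?_
  · have : Commute (y : G) a := mem_center_iff.1 ha y
    rwa [this.mul_pow, y.2, one_mul]
  · exact Subtype.ext (mul_right_cancel (congrArg Subtype.val h))

theorem card_sq_ne_one_ne_six_of_orderOf_eq_three [Finite G] {a : G} (ha : a ∈ center G)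
    (ha3 : orderOf a = 3) : Nat.card {x : G // x ^ 2 ≠ 1} ≠ 6 := by
  intro hS
  have card_add := card_sq_eq_one_add_card_sq_ne_one (G := G)
  have card_le := orderOf_mul_card_sq_eq_one_le ha (by rw [ha3]; decide)
  have dvd_card := orderOf_dvd_natCard a
  rw [ha3] at card_le dvd_card
  have card_pos : 0 < Nat.card {x : G // x ^ 2 = 1} :=
    Nat.card_pos_iff.2 ⟨⟨1, one_pow 2⟩, inferInstance⟩
  have card_eq : Nat.card G = 9 := by omega
  have := card_sq_eq_one_of_odd_card (G := G) (by rw [card_eq]; decide)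
  omega

theorem card_sq_ne_one_ne_six_of_pow_four_eq_one [Finite G] (hG : IsPGroup 2 G)
    (h4 : ∀ x : G, x ^ 4 = 1) {a : G} (ha : a ∈ center G) (hsq : a ^ 2 ≠ 1) :
    Nat.card {x : G // x ^ 2 ≠ 1} ≠ 6 := by
  intro hS
  have card_add := card_sq_eq_one_add_card_sq_ne_one (G := G)
  have card_le := card_sq_eq_one_le_card_sq_ne_one ha hsq
  have card_pos : 0 < Nat.card {x : G // x ^ 2 = 1} :=
    Nat.card_pos_iff.2 ⟨⟨1, one_pow 2⟩, inferInstance⟩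
  have card_eq : Nat.card G = 8 := by
    obtain ⟨k, hk⟩ := IsPGroup.iff_card.1 hG
    have lt_four : k < 4 := (Nat.pow_lt_pow_iff_right one_lt_two).1 (show 2 ^ k < 2 ^ 4 by omega)
    interval_cases k <;> omega
  have sq_roots_eq : {1, a ^ 2} = {x : G | x ^ 2 = 1} := by
    refine Set.eq_of_subset_of_ncard_le ?_ ?_
    · rintro _ (rfl | rfl)
      exacts [one_pow 2, (pow_mul a 2 2).symm.trans (h4 a)]
    · rw [Set.ncard_pair hsq.symm, ← Nat.card_coe_set_eq, Set.coe_ofPred]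
      omega
  have mem_of_sq_eq_one {x : G} (hx : x ^ 2 = 1) : x ∈ zpowers a := by
    obtain rfl | rfl := sq_roots_eq.ge hx
    exacts [one_mem _, npow_mem_zpowers a 2]
  have mem_zpowers (x : G) : x ∈ zpowers a := by
    obtain hx | hx := sq_roots_eq.ge (show (x ^ 2) ^ 2 = 1 by rw [← pow_mul]; exact h4 x)
    · exact mem_of_sq_eq_one hx
    · refine (Subgroup.mul_mem_cancel_right _ (Subgroup.mem_zpowers a)).1
        (mem_of_sq_eq_one (x := x * a) ?_)
      have : Commute x a := mem_center_iff.1 ha x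
      rw [this.mul_pow, hx, ← pow_add]
      exact h4 a
  have : Nat.card G ≤ 4 := by
    rw [← orderOf_eq_card_of_forall_mem_zpowers mem_zpowers]
    exact orderOf_le_of_pow_eq_one four_pos (h4 a)
  omega

theorem card_sq_ne_one_centralizer {a : G} (ha : ∀ x : G, x ^ 2 ≠ 1 → Commute x a) :
    Nat.card {x : centralizer {a} // x ^ 2 ≠ 1} = Nat.card {x : G // x ^ 2 ≠ 1} := by
  have mem_of_sq_ne_one {x : G} (hx : x ^ 2 ≠ 1) : x ∈ centralizer {a} :=
    mem_centralizer_singleton_iff.2 (ha x hx)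
  refine Nat.card_congr ((Equiv.subtypeEquivRight fun x ↦ ?_).trans
    (Equiv.subtypeSubtypeEquivSubtype mem_of_sq_ne_one))
  rw [ne_eq, ne_eq, ← Subgroup.coe_pow, OneMemClass.coe_eq_one]

theorem mk_mem_center_centralizer (a : G) :
    (⟨a, mem_centralizer_singleton_iff.2 rfl⟩ : centralizer {a}) ∈ center (centralizer {a}) :=
  mem_center_iff.2 fun x ↦ Subtype.ext (mem_centralizer_singleton_iff.1 x.2)

theorem sq_eq_one_of_semiconjBy_inv {a x : G} {n : ℕ} (hn : Odd n) (ha : a ^ n = 1)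
    (hax : SemiconjBy a x x⁻¹) : x ^ 2 = 1 := by
  obtain ⟨k, rfl⟩ := hn
  have inverts : SemiconjBy (a ^ (2 * k + 1)) x x⁻¹ := by
    rw [pow_succ', pow_mul, sq]
    exact hax.mul_left ((commute_mul_of_semiconjBy_inv hax hax).pow_left k)
  rw [ha, SemiconjBy, one_mul, mul_one] at inverts
  rw [sq, mul_eq_one_iff_eq_inv, ← inverts]

theorem orderOf_ne_three_of_card_largeCyclic [Finite G] (hT : Nat.card (largeCyclic G) = 3)
    (hφ : ∀ x : G, φ (orderOf x) ≤ 2) (a : G) : orderOf a ≠ 3 := by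
  intro ha
  have ha_mem : zpowers a ∈ largeCyclic G :=
    zpowers_mem_largeCyclic.2 (by rw [ne_eq, ← orderOf_le_two_iff, ha]; decide)
  let P := zpowers (ConjAct.toConjAct a)
  have hP : IsPGroup 3 P := IsPGroup.of_card (n := 1) (by
    rw [Nat.card_zpowers, pow_one, MulEquiv.orderOf_eq, ha])
  have hfix : ⟨zpowers a, ha_mem⟩ ∈ MulAction.fixedPoints P (largeCyclic G) := by
    rintro ⟨_, k, rfl⟩
    refine Subtype.ext ((toConjAct_smul_zpowers (a ^ k) a).trans ?_)
    rw [(Commute.zpow_self a k).eq, mul_inv_cancel_right]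
  have fixed {x : G} (hx : x ^ 2 ≠ 1) : ConjAct.toConjAct a • zpowers x = zpowers x :=
    congrArg Subtype.val ((fixedPoints_eq_univ_of_card_eq_prime hP hT ⟨_, hfix⟩).ge
      (Set.mem_univ ⟨zpowers x, zpowers_mem_largeCyclic.2 hx⟩) ⟨_, mem_zpowers _⟩)
  have commute (x : G) (hx : x ^ 2 ≠ 1) : Commute x a :=
    ((commute_or_semiconjBy_inv (hφ x) hx (fixed hx)).resolve_right fun h ↦
      hx (sq_eq_one_of_semiconjBy_inv (by decide) (ha ▸ pow_orderOf_eq_one a) h)).symm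
  refine card_sq_ne_one_ne_six_of_orderOf_eq_three (mk_mem_center_centralizer a)
    (by rwa [Subgroup.orderOf_mk]) ?_
  rw [card_sq_ne_one_centralizer commute, card_sq_ne_one_eq_six hT hφ]

theorem isPGroup_two_of_card_largeCyclic [Finite G] (hT : Nat.card (largeCyclic G) = 3)
    (hφ : ∀ x : G, φ (orderOf x) ≤ 2) : IsPGroup 2 G := by
  refine IsPGroup.of_card (Nat.eq_prime_pow_of_unique_prime_dvd Nat.card_pos.ne' ?_)
  intro p hp hdvd
  have : Fact p.Prime := ⟨hp⟩
  obtain ⟨x, hx⟩ := exists_prime_orderOf_dvd_card' p hdvd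
  have le_two := hφ x
  rw [hx, Nat.totient_prime hp] at le_two
  have ne_three : p ≠ 3 := hx ▸ orderOf_ne_three_of_card_largeCyclic hT hφ x
  have := hp.two_le
  omega

theorem pow_four_eq_one_of_totient_orderOf_le_two {x : G} (hG : IsPGroup 2 G)
    (hφ : φ (orderOf x) ≤ 2) : x ^ 4 = 1 := by
  obtain ⟨k, hk⟩ := IsPGroup.iff_orderOf.1 hG x
  rw [← orderOf_dvd_iff_pow_eq_one, hk]
  refine pow_dvd_pow 2 (n := 2) ?_
  by_contra! hlt
  have : k - 1 ≤ 1 := by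
    rw [hk, Nat.totient_prime_pow Nat.prime_two (by omega)] at hφ
    exact (Nat.pow_le_pow_iff_right one_lt_two).1 (by simpa using hφ)
  omega

theorem exists_forall_commute_or_semiconjBy_inv [Finite G] (hT : Nat.card (largeCyclic G) = 3)
    (hφ : ∀ x : G, φ (orderOf x) ≤ 2) :
    ∃ a : G, a ^ 2 ≠ 1 ∧ ∀ g, Commute g a ∨ SemiconjBy g a a⁻¹ := by
  have hP : IsPGroup 2 (ConjAct G) :=
    (isPGroup_two_of_card_largeCyclic hT hφ).of_equiv ConjAct.toConjAct
  obtain ⟨⟨H, hcyc, hcard⟩, hfix⟩ := hP.nonempty_fixed_point_of_prime_not_dvd_card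
    (largeCyclic G) (by rw [hT]; decide)
  obtain ⟨a, rfl⟩ := (Subgroup.isCyclic_iff_exists_zpowers_eq_top H).1 hcyc
  have ha : a ^ 2 ≠ 1 := zpowers_mem_largeCyclic.1 ⟨hcyc, hcard⟩
  exact ⟨a, ha, fun g ↦ commute_or_semiconjBy_inv (hφ a) ha
    (congrArg Subtype.val (hfix (ConjAct.toConjAct g)))⟩

theorem exists_sq_ne_one_not_commute [Finite G] (hG : IsPGroup 2 G) (h4 : ∀ x : G, x ^ 4 = 1)
    (hS : Nat.card {x : G // x ^ 2 ≠ 1} = 6) {a : G} (ha : a ^ 2 ≠ 1) :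
    ∃ t : G, t ^ 2 ≠ 1 ∧ ¬ Commute t a := by
  by_contra! commute
  refine card_sq_ne_one_ne_six_of_pow_four_eq_one (hG.to_subgroup (centralizer {a}))
    (fun x ↦ Subtype.ext (h4 x)) (mk_mem_center_centralizer a)
    (fun h ↦ ha (congrArg Subtype.val h)) ?_
  rw [card_sq_ne_one_centralizer commute, hS]

theorem mul_sq_eq_sq_of_semiconjBy_inv {t y : G} (hty : SemiconjBy t y y⁻¹) :
    (t * y) ^ 2 = t ^ 2 := by
  rw [sq, sq]
  nth_rw 2 [hty.eq]
  rw [mul_assoc, mul_inv_cancel_left]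

theorem commute_of_mem_zpowers {a x : G} (hx : x ∈ zpowers a) : Commute x a := by
  obtain ⟨k, rfl⟩ := hx
  exact Commute.zpow_self a k

theorem setOf_sq_ne_one_eq [Finite G] (hS : Nat.card {x : G // x ^ 2 ≠ 1} = 6) {a t : G}
    (ha : orderOf a = 4) (ht : t ^ 2 ≠ 1) (hta : SemiconjBy t a a⁻¹) (hcomm : ¬ Commute t a) :
    {x : G | x ^ 2 ≠ 1} = {a, a⁻¹} ∪ (t * ·) '' zpowers a := by
  have ha2 : a ^ 2 ≠ 1 := by
    rw [ne_eq, ← orderOf_le_two_iff]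
    omega
  have disjoint : Disjoint {a, a⁻¹} ((t * ·) '' (zpowers a : Set G)) := by
    rw [Set.disjoint_right]
    rintro _ ⟨y, hy, rfl⟩ hty
    have hty' : t * y ∈ zpowers a := by
      obtain h | h : t * y = a ∨ t * y = a⁻¹ := hty
      exacts [h ▸ mem_zpowers a, h ▸ inv_mem (mem_zpowers a)]
    exact hcomm (commute_of_mem_zpowers ((Subgroup.mul_mem_cancel_right _ hy).1 hty'))
  have ne_inv : a ≠ a⁻¹ := fun h ↦ ha2 (by rw [sq, mul_eq_one_iff_eq_inv, ← h])
  refine (Set.eq_of_subset_of_ncard_le ?_ (le_of_eq ?_)).symm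
  · rintro _ ((rfl | rfl) | ⟨y, hy, rfl⟩)
    · exact ha2
    · simpa using ha2
    · exact (mul_sq_eq_sq_of_semiconjBy_inv (semiconjBy_inv_of_mem_zpowers hta hy)).trans_ne ht
  · rw [Set.ncard_union_eq disjoint, Set.ncard_pair ne_inv,
      Set.ncard_image_of_injective _ (mul_right_injective t), ← Nat.card_coe_set_eq,
      ← Nat.card_coe_set_eq]
    exact hS.trans (by rw [SetLike.coe_sort_coe, Nat.card_zpowers, ha])

theorem eq_sq_of_mem_zpowers {a x : G} (ha : orderOf a = 4) (hx : x ∈ zpowers a) (hx1 : x ≠ 1)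
    (hx2 : x ^ 2 = 1) : x = a ^ 2 := by
  obtain ⟨k, rfl⟩ := hx
  have dvd : (4 : ℤ) ∣ k * 2 := by
    have : a ^ (k * 2) = 1 := by simpa [zpow_mul] using hx2
    simpa [ha] using orderOf_dvd_iff_zpow_eq_one.2 this
  have not_dvd : ¬ (4 : ℤ) ∣ k := by
    rwa [show (4 : ℤ) = orderOf a by rw [ha]; rfl, orderOf_dvd_iff_zpow_eq_one]
  have modEq : k ≡ 2 [ZMOD orderOf a] := by
    rw [ha]
    grind [Int.ModEq]
  exact_mod_cast zpow_eq_zpow_iff_modEq.2 modEq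

theorem mem_zpowers_of_commute {a t g : G} (ha : a ^ 2 ≠ 1)
    (hcomm : ¬ Commute t a) (hS : {x : G | x ^ 2 ≠ 1} = {a, a⁻¹} ∪ (t * ·) '' zpowers a)
    (hg : Commute g a) : g ∈ zpowers a := by
  have mem_of_sq_ne_one {x : G} (hx : x ^ 2 ≠ 1) (hxa : Commute x a) : x ∈ zpowers a := by
    obtain (rfl | rfl) | ⟨y, hy, rfl⟩ := hS.le hx
    · exact mem_zpowers _
    · exact inv_mem (mem_zpowers a)
    · refine absurd ?_ hcomm
      simpa using hxa.mul_left (commute_of_mem_zpowers hy).inv_left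
  by_cases hg2 : g ^ 2 = 1
  · refine (Subgroup.mul_mem_cancel_right _ (mem_zpowers a)).1
      (mem_of_sq_ne_one ?_ (hg.mul_left (.refl a)))
    rwa [hg.mul_pow, hg2, one_mul]
  · exact mem_of_sq_ne_one hg2 hg

theorem nonempty_mulEquiv_quaternionGroup_of_card_largeCyclic [Finite G]
    (hT : Nat.card (largeCyclic G) = 3) (hφ : ∀ x : G, φ (orderOf x) ≤ 2) :
    Nonempty (G ≃* QuaternionGroup 2) := by
  have hG := isPGroup_two_of_card_largeCyclic hT hφ
  have hS := card_sq_ne_one_eq_six hT hφ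
  have h4 (x : G) : x ^ 4 = 1 := pow_four_eq_one_of_totient_orderOf_le_two hG (hφ x)
  obtain ⟨a, ha, hcases⟩ := exists_forall_commute_or_semiconjBy_inv hT hφ
  obtain ⟨t, ht, hcomm⟩ := exists_sq_ne_one_not_commute hG h4 hS ha
  have ha4 : orderOf a = 2 ^ (1 + 1) := orderOf_eq_prime_pow ha (h4 a)
  have hta : SemiconjBy t a a⁻¹ := (hcases t).resolve_left hcomm
  have centralizer_le {g : G} : Commute g a → g ∈ zpowers a :=
    mem_zpowers_of_commute ha hcomm (setOf_sq_ne_one_eq hS ha4 ht hta hcomm)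
  have mem_or_mem (g : G) : g ∈ zpowers a ∨ t⁻¹ * g ∈ zpowers a := by
    refine (hcases g).imp centralizer_le fun hg ↦ centralizer_le ?_
    exact commute_mul_of_semiconjBy_inv (by simpa using hta.inv_right.inv_symm_left) hg
  have t_sq : t ^ 2 = a ^ 2 := by
    refine eq_sq_of_mem_zpowers ha4 (centralizer_le ?_) ht (by rw [← pow_mul]; exact h4 t)
    exact sq t ▸ commute_mul_of_semiconjBy_inv hta hta
  exact nonempty_mulEquiv_quaternionGroup ha4 t_sq hta (mt commute_of_mem_zpowers hcomm) mem_or_mem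

theorem card_isCyclic_congr {K : Type*} [Group K] (e : G ≃* K) :
    Nat.card {H : Subgroup G // IsCyclic H} = Nat.card {H : Subgroup K // IsCyclic H} :=
  Nat.card_congr (e.mapSubgroup.toEquiv.subtypeEquiv fun H ↦ (e.subgroupMap H).isCyclic)

theorem setOf_isCyclic_eq_range_zpowers :
    {H : Subgroup G | IsCyclic H} = Set.range (zpowers : G → Subgroup G) :=
  Set.ext fun H ↦ Subgroup.isCyclic_iff_exists_zpowers_eq_top H

theorem coe_image_pow_range_card [Fintype G] [DecidableEq G] (x : G) :
    ((Finset.range (Fintype.card G)).image (x ^ ·) : Set G) = zpowers x := by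
  refine subset_antisymm ?_ fun y hy ↦ ?_
  · simp [Set.subset_def, npow_mem_zpowers]
  · rw [SetLike.mem_coe, mem_zpowers_iff_mem_range_orderOf] at hy
    exact Finset.image_mono _ (Finset.range_mono orderOf_le_card_univ) hy

theorem card_isCyclic_eq_card_image_pow [Fintype G] [DecidableEq G] :
    Nat.card {H : Subgroup G // IsCyclic H} =
      (Finset.univ.image fun x : G ↦ (Finset.range (Fintype.card G)).image (x ^ ·)).card := by
  calc Nat.card {H : Subgroup G // IsCyclic H}
      = (Set.range (zpowers : G → Subgroup G)).ncard := by
        rw [← setOf_isCyclic_eq_range_zpowers]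
        rfl
    _ = (Set.range fun x : G ↦ (zpowers x : Set G)).ncard := by
        rw [← Set.ncard_image_of_injective _ SetLike.coe_injective, ← Set.range_comp]
        rfl
    _ = (Set.range fun x : G ↦ (Finset.range (Fintype.card G)).image (x ^ ·)).ncard := by
        simp_rw [← coe_image_pow_range_card]
        rw [← Set.ncard_image_of_injective _ Finset.coe_injective, ← Set.range_comp]
        rfl
    _ = _ := by
        rw [← Set.ncard_coe_finset, Finset.coe_image, Finset.coe_univ, Set.image_univ]

theorem card_isCyclic_of_card_image_pow {K : Type*} [Group K] [Fintype K] [DecidableEq K]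
    (hK : (Finset.univ.image fun x : K ↦ (Finset.range (Fintype.card K)).image (x ^ ·)).card =
      Fintype.card K - 3) (e : G ≃* K) :
    Nat.card {H : Subgroup G // IsCyclic H} = Nat.card G - 3 := by
  rw [card_isCyclic_congr e, Nat.card_congr e.toEquiv, card_isCyclic_eq_card_image_pow, hK,
    Nat.card_eq_fintype_card]

end

theorem stmt_3 (G : Type*) [Group G] [Finite G] :
    Nat.card {H : Subgroup G // IsCyclic H} = Nat.card G - 3 ↔
      (Nonempty (G ≃* QuaternionGroup 2) ∨
       Nonempty (G ≃* Multiplicative (ZMod 5)) ∨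
       Nonempty (G ≃* DihedralGroup 5)) := by
  constructor
  · intro h
    have card_pos : 0 < Nat.card {H : Subgroup G // IsCyclic H} :=
      Nat.card_pos_iff.2 ⟨⟨⊥, inferInstance⟩, inferInstance⟩
    obtain ⟨a, hφ, ha⟩ | ⟨hT, hφ⟩ :=
      forall_largeCyclic_eq_or_card_largeCyclic_eq_three (G := G) (by omega)
    · exact .inr (nonempty_mulEquiv_of_forall_largeCyclic_eq hφ ha)
    · exact .inl (nonempty_mulEquiv_quaternionGroup_of_card_largeCyclic hT hφ)
  · rintro (⟨⟨e⟩⟩ | ⟨⟨e⟩⟩ | ⟨⟨e⟩⟩) <;> exact card_isCyclic_of_card_image_pow (by decide) e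
end

section
/- If G is a finite 2-group with an odd number of cyclic subgroups of order 4, then G is cyclic, dihedral, generalized quaternion, or quasidihedral. -/
/-- Relators for the semidihedral (quasidihedral) group of order `2^n`:
`⟨r, s | r^(2^(n-1)) = s^2 = 1, s*r*s = r^(2^(n-2) - 1)⟩`.
The generator `true` plays the role of `r` and `false` the role of `s`. -/
def semidihedralRels (n : ℕ) : Set (FreeGroup Bool) :=
  { FreeGroup.of true ^ 2 ^ (n - 1),
    FreeGroup.of false ^ 2,
    FreeGroup.of false * FreeGroup.of true * FreeGroup.of false *
      (FreeGroup.of true ^ (2 ^ (n - 2) - 1))⁻¹ }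

/-- The semidihedral (quasidihedral) group of order `2^n`. -/
def SemidihedralGroup (n : ℕ) : Type := PresentedGroup (semidihedralRels n)

instance (n : ℕ) : Group (SemidihedralGroup n) :=
  inferInstanceAs (Group (PresentedGroup (semidihedralRels n)))

/-!
Suppose first that `G` has no normal Klein four-subgroup, and let `⟨a⟩` be a maximal normal cyclic
subgroup. If some element outside `⟨a⟩` acted on `⟨a⟩` by an exponent congruent to `1` modulo `4`,
it could be chosen central and of order two modulo `⟨a⟩`. By maximality `a` would not be a power of
this element, so its product with a suitable power of `a` would be an involution, and together with
the involution of `⟨a⟩` it would generate a normal four-group. So `G / ⟨a⟩` embeds into `(ℤ / 4)ˣ`,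
and a generator of it acts by an exponent congruent to `-1` modulo `4`, which leaves only the four
families.

Suppose now that `V = {1, z, y, yz}` is normal with `z` central, and let `C` be its centralizer. The
elements `g ∉ C` with `g² = z` and those with `g² = 1` are exchanged by multiplication by `y`. If
`C ≠ V`, their union is stable under a subgroup of order `8`, so there are `0` modulo `4` of each.
The other elements of order `4` form a union of cosets of `V`. Hence the number of elements of order
`4` is divisible by `4`, that is, the number of cyclic subgroups of order `4` is even. If `C = V`,
then `|G|` divides `8`, and an element of order `4` forces `G` to be dihedral.
-/

open Subgroup

section MetacyclicPairs

variable {G H P : Type*} [Group G] [Group H] [Group P] {u v k l : ℤ} {a x : G} {b y : H}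

/-- `a` and `x` generate `G` as an extension of the cyclic group `⟨a⟩` by a group of order `2`:
`x ∉ ⟨a⟩` acts on `⟨a⟩` by the exponent `u`, and its square is `a ^ k`. The exponents only matter
modulo `orderOf a`, and together with `orderOf a` they determine `G` up to isomorphism. -/
structure IsMetacyclicPair (a x : G) (u k : ℤ) : Prop where
  closure_eq_top : closure {a, x} = ⊤
  notMem_zpowers : x ∉ zpowers a
  conj_eq : x * a * x⁻¹ = a ^ u
  sq_eq : x ^ 2 = a ^ k

theorem conj_zpow_eq (h : x * a * x⁻¹ = a ^ u) (i : ℤ) : x * a ^ i * x⁻¹ = a ^ (u * i) := by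
  rw [zpow_mul, ← h, conj_zpow]

theorem zpow_mul_eq_mul_zpow (h : x * a * x⁻¹ = a ^ u) (hsq : x ^ 2 = a ^ k) (i : ℤ) :
    a ^ i * x = x * a ^ (u * i) := by
  calc a ^ i * x = x * (x ^ 2)⁻¹ * (x * a ^ i * x⁻¹) * x ^ 2 := by group
    _ = x * a ^ (u * i) := by rw [conj_zpow_eq h, hsq]; group

theorem mul_zpow_sq (h : x * a * x⁻¹ = a ^ u) (hsq : x ^ 2 = a ^ k) (m : ℤ) :
    (x * a ^ m) ^ 2 = a ^ ((u + 1) * m + k) := by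
  calc (x * a ^ m) ^ 2 = x * a ^ m * x⁻¹ * x ^ 2 * a ^ m := by rw [sq]; group
    _ = a ^ ((u + 1) * m + k) := by
      rw [conj_zpow_eq h, hsq, ← zpow_add, ← zpow_add]
      ring_nf

theorem exists_zpow_of_mem_closure (h : x * a * x⁻¹ = a ^ u) (hsq : x ^ 2 = a ^ k) {g : G}
    (hg : g ∈ closure {a, x}) : ∃ i : ℤ, g = a ^ i ∨ g = x * a ^ i := by
  have mul_zpow_closed (g : G) (j : ℤ) : (∃ i : ℤ, g = a ^ i ∨ g = x * a ^ i) →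
      ∃ i : ℤ, g * a ^ j = a ^ i ∨ g * a ^ j = x * a ^ i := by
    rintro ⟨i, rfl | rfl⟩
    · exact ⟨i + j, .inl (zpow_add a i j).symm⟩
    · exact ⟨i + j, .inr (by rw [zpow_add, mul_assoc])⟩
  have mul_right_closed (g : G) : (∃ i : ℤ, g = a ^ i ∨ g = x * a ^ i) →
      ∃ i : ℤ, g * x = a ^ i ∨ g * x = x * a ^ i := by
    rintro ⟨i, rfl | rfl⟩
    · exact ⟨u * i, .inr (zpow_mul_eq_mul_zpow h hsq i)⟩
    · refine ⟨k + u * i, .inl ?_⟩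
      rw [mul_assoc, zpow_mul_eq_mul_zpow h hsq, ← mul_assoc, ← sq, hsq, zpow_add]
  have inv_eq : x⁻¹ = x * a ^ (-k) := by rw [zpow_neg, ← hsq]; group
  induction hg using closure_induction_right with
  | one => exact ⟨0, .inl (zpow_zero a).symm⟩
  | mul_right g _ s hs ih =>
    rcases hs with rfl | rfl
    · simpa only [zpow_one] using mul_zpow_closed g 1 ih
    · exact mul_right_closed g ih
  | mul_inv_cancel g _ s hs ih =>
    rcases hs with rfl | rfl
    · simpa only [zpow_neg_one] using mul_zpow_closed g (-1) ih
    · rw [inv_eq, ← mul_assoc]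
      exact mul_zpow_closed _ _ (mul_right_closed g ih)

theorem quaternionGroup_a_one_zpow {n : ℕ} (i : ℤ) :
    (QuaternionGroup.a 1 : QuaternionGroup n) ^ i = QuaternionGroup.a i := by
  obtain ⟨n, rfl | rfl⟩ := i.eq_nat_or_neg
  · simp
  · rw [zpow_neg, zpow_natCast, QuaternionGroup.a_one_pow]
    exact inv_eq_of_mul_eq_one_right (by simp)

namespace IsMetacyclicPair

theorem congr (h : IsMetacyclicPair a x u k) (hu : a ^ u = a ^ v) (hk : a ^ k = a ^ l) :
    IsMetacyclicPair a x v l where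
  closure_eq_top := h.closure_eq_top
  notMem_zpowers := h.notMem_zpowers
  conj_eq := h.conj_eq.trans hu
  sq_eq := h.sq_eq.trans hk

theorem mul_zpow (h : IsMetacyclicPair a x u k) (m : ℤ) :
    IsMetacyclicPair a (x * a ^ m) u ((u + 1) * m + k) where
  closure_eq_top := by
    rw [eq_top_iff, ← h.closure_eq_top, closure_le]
    have ha : a ∈ closure {a, x * a ^ m} := subset_closure (.inl rfl)
    have hxa : x * a ^ m ∈ closure {a, x * a ^ m} := subset_closure (.inr rfl)
    rintro _ (rfl | rfl)
    · exact ha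
    · exact (Subgroup.mul_mem_cancel_right _ (zpow_mem ha m)).1 hxa
  notMem_zpowers := by
    rw [Subgroup.mul_mem_cancel_right _ (zpow_mem_zpowers a m)]
    exact h.notMem_zpowers
  conj_eq := by
    rw [← h.conj_eq]
    group
  sq_eq := mul_zpow_sq h.conj_eq h.sq_eq m

theorem bijective_of_closure_eq_top {f : P →* G} {α ξ : P}
    (h : IsMetacyclicPair (f α) (f ξ) u k) (hP : closure {α, ξ} = ⊤)
    (hconj : ξ * α * ξ⁻¹ = α ^ u) (hsq : ξ ^ 2 = α ^ k) (hα : α ^ orderOf (f α) = 1) :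
    Function.Bijective f := by
  constructor
  · rw [injective_iff_map_eq_one]
    intro g hg
    obtain ⟨i, rfl | rfl⟩ := exists_zpow_of_mem_closure hconj hsq (hP ▸ mem_top g)
    · rw [map_zpow, ← orderOf_dvd_iff_zpow_eq_one] at hg
      obtain ⟨j, rfl⟩ := hg
      rw [zpow_mul, zpow_natCast, hα, one_zpow]
    · rw [map_mul, map_zpow] at hg
      refine absurd ?_ h.notMem_zpowers
      rw [eq_inv_of_mul_eq_one_left hg]
      exact inv_mem (zpow_mem_zpowers _ i)
  · rw [← MonoidHom.range_eq_top, MonoidHom.range_eq_map, ← hP, MonoidHom.map_closure,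
      Set.image_pair, h.closure_eq_top]

-- The isomorphism is the subgroup of `G × H` generated by `(a, b)` and `(x, y)`, seen as a graph.
theorem nonempty_mulEquiv (hG : IsMetacyclicPair a x u k) (hH : IsMetacyclicPair b y u k)
    (hab : orderOf a = orderOf b) : Nonempty (G ≃* H) := by
  let R : Subgroup (G × H) := closure {(a, b), (x, y)}
  let α : R := ⟨(a, b), subset_closure (.inl rfl)⟩
  let ξ : R := ⟨(x, y), subset_closure (.inr rfl)⟩
  have closure_eq : closure {α, ξ} = ⊤ := by
    rw [← closure_closure_coe_preimage (k := {(a, b), (x, y)})]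
    congr 1
    ext ⟨g, hg⟩
    simp [α, ξ]
  have conj_eq : ξ * α * ξ⁻¹ = α ^ u :=
    Subtype.ext (Prod.ext hG.conj_eq hH.conj_eq)
  have sq_eq : ξ ^ 2 = α ^ k := Subtype.ext (Prod.ext hG.sq_eq hH.sq_eq)
  have pow_eq_one : α ^ orderOf a = 1 :=
    Subtype.ext (Prod.ext (pow_orderOf_eq_one a) (hab ▸ pow_orderOf_eq_one b))
  let toG : R →* G := (MonoidHom.fst G H).comp R.subtype
  let toH : R →* H := (MonoidHom.snd G H).comp R.subtype
  have toG_bijective : Function.Bijective toG :=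
    bijective_of_closure_eq_top (α := α) (ξ := ξ) hG closure_eq conj_eq sq_eq pow_eq_one
  have toH_bijective : Function.Bijective toH :=
    bijective_of_closure_eq_top (α := α) (ξ := ξ) hH closure_eq conj_eq sq_eq (hab ▸ pow_eq_one)
  exact ⟨(MulEquiv.ofBijective toG toG_bijective).symm.trans
    (MulEquiv.ofBijective toH toH_bijective)⟩

theorem of_index_eq_two (hindex : (zpowers a).index = 2) (hx : x ∉ zpowers a)
    (hconj : x * a * x⁻¹ = a ^ u) (hsq : x ^ 2 = a ^ k) : IsMetacyclicPair a x u k where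
  closure_eq_top := by
    rw [eq_top_iff]
    intro g _
    have ha : zpowers a ≤ closure {a, x} := (zpowers_le).2 (subset_closure (.inl rfl))
    by_cases hg : g ∈ zpowers a
    · exact ha hg
    · have hgx : g * x ∈ zpowers a := by simp [mul_mem_iff_of_index_two hindex, hg, hx]
      exact (Subgroup.mul_mem_cancel_right _ (subset_closure (.inr rfl))).1 (ha hgx)
  notMem_zpowers := hx
  conj_eq := hconj
  sq_eq := hsq

theorem dihedralGroup (n : ℕ) :
    IsMetacyclicPair (DihedralGroup.r 1 : DihedralGroup n) (DihedralGroup.sr 0) (-1) 0 where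
  closure_eq_top := by
    let K : Subgroup (DihedralGroup n) := closure {.r 1, .sr 0}
    have hr : .r 1 ∈ K := subset_closure (.inl rfl)
    have hs : .sr 0 ∈ K := subset_closure (.inr rfl)
    refine eq_top_iff.2 ?_
    rintro (i | i) - <;> obtain ⟨j, rfl⟩ := ZMod.intCast_surjective i
    · simpa using zpow_mem hr j
    · simpa using mul_mem hs (zpow_mem hr j)
  notMem_zpowers := by
    rintro ⟨i, hi⟩
    simp at hi
  conj_eq := by simp
  sq_eq := by simp [sq]

theorem quaternionGroup (n : ℕ) :
    IsMetacyclicPair (QuaternionGroup.a 1 : QuaternionGroup n) (QuaternionGroup.xa 0) (-1) n where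
  closure_eq_top := by
    let K : Subgroup (QuaternionGroup n) := closure {.a 1, .xa 0}
    have ha : .a 1 ∈ K := subset_closure (.inl rfl)
    have hx : .xa 0 ∈ K := subset_closure (.inr rfl)
    refine eq_top_iff.2 ?_
    rintro (i | i) - <;> obtain ⟨j, rfl⟩ := ZMod.intCast_surjective i
    · simpa [quaternionGroup_a_one_zpow] using zpow_mem ha j
    · simpa [quaternionGroup_a_one_zpow] using mul_mem hx (zpow_mem ha j)
  notMem_zpowers := by
    rintro ⟨i, hi⟩
    simp [quaternionGroup_a_one_zpow] at hi
  conj_eq := by rw [mul_inv_eq_iff_eq_mul, quaternionGroup_a_one_zpow]; simp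
  sq_eq := by simp

theorem nonempty_mulEquiv_dihedralGroup (h : IsMetacyclicPair a x (-1) 0) :
    Nonempty (G ≃* DihedralGroup (orderOf a)) :=
  h.nonempty_mulEquiv (dihedralGroup _) DihedralGroup.orderOf_r_one.symm

theorem nonempty_mulEquiv_quaternionGroup {n : ℕ} (h : IsMetacyclicPair a x (-1) n)
    (ha : orderOf a = 2 * n) : Nonempty (G ≃* QuaternionGroup n) :=
  h.nonempty_mulEquiv (quaternionGroup n) (ha.trans QuaternionGroup.orderOf_a_one.symm)

theorem nonempty_mulEquiv_semidihedralGroup {n : ℕ}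
    (h : IsMetacyclicPair a x ((2 ^ (n - 2) - 1 : ℕ) : ℤ) 0) (ha : orderOf a = 2 ^ (n - 1)) :
    Nonempty (G ≃* SemidihedralGroup n) := by
  have x_sq : x ^ 2 = 1 := h.sq_eq.trans (zpow_zero a)
  have relations : ∀ w ∈ semidihedralRels n,
      FreeGroup.lift (fun b : Bool => if b then a else x) w = 1 := by
    have hxax : x * a * x = a ^ (2 ^ (n - 2) - 1) := by
      have hconj := h.conj_eq
      rwa [zpow_natCast, inv_eq_of_mul_eq_one_left ((sq x).symm.trans x_sq)] at hconj
    rintro w (rfl | rfl | rfl)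
    · simp [← ha, pow_orderOf_eq_one]
    · simpa using x_sq
    · simp [hxax]
  let r : SemidihedralGroup n := PresentedGroup.of true
  let s : SemidihedralGroup n := PresentedGroup.of false
  have r_pow : r ^ 2 ^ (n - 1) = 1 := PresentedGroup.one_of_mem (.inl rfl)
  have s_sq : s ^ 2 = 1 := PresentedGroup.one_of_mem (.inr (.inl rfl))
  have conj_r : s * r * s⁻¹ = r ^ ((2 ^ (n - 2) - 1 : ℕ) : ℤ) := by
    rw [inv_eq_of_mul_eq_one_left ((sq s).symm.trans s_sq), zpow_natCast]
    exact mul_inv_eq_one.1 (PresentedGroup.one_of_mem (.inr (.inr rfl)))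
  have closure_eq : closure {r, s} = ⊤ := by
    have closure_range := PresentedGroup.closure_range_of (semidihedralRels n)
    rwa [Bool.range_eq, Set.pair_comm] at closure_range
  let f : SemidihedralGroup n →* G := PresentedGroup.toGroup relations
  have f_r : f r = a := PresentedGroup.toGroup.of relations
  have f_s : f s = x := PresentedGroup.toGroup.of relations
  have f_bijective : Function.Bijective f :=
    bijective_of_closure_eq_top (f_r.symm ▸ f_s.symm ▸ h) closure_eq conj_r s_sq
      (by rw [f_r, ha, r_pow])
  exact ⟨(MulEquiv.ofBijective f f_bijective).symm⟩

end IsMetacyclicPair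

theorem zpow_two_pow_eq_one {n : ℕ} (ha : orderOf a = 2 ^ n) : a ^ (2 ^ n : ℤ) = 1 := by
  exact_mod_cast ha ▸ pow_orderOf_eq_one a

theorem zpow_eq_one_or_eq_zpow_two_pow {n : ℕ} {i t : ℤ} (ha : orderOf a = 2 ^ (n + 1))
    (ht : Odd t) (h : a ^ (2 * i * t) = 1) : a ^ i = 1 ∨ a ^ i = a ^ (2 ^ n : ℤ) := by
  have pow_dvd : (2 : ℤ) ^ (n + 1) ∣ 2 * i * t := by
    exact_mod_cast ha ▸ orderOf_dvd_iff_zpow_eq_one.2 h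
  have coprime : IsCoprime ((2 : ℤ) ^ n) t := (Int.isCoprime_two_left.2 ht).pow_left
  obtain ⟨j, rfl⟩ : (2 : ℤ) ^ n ∣ i := by
    rw [pow_succ', mul_assoc, mul_dvd_mul_iff_left two_ne_zero] at pow_dvd
    exact coprime.dvd_of_dvd_mul_right pow_dvd
  have zpow_order : a ^ ((2 : ℤ) ^ n * 2) = 1 := by
    rw [← pow_succ, zpow_two_pow_eq_one ha]
  obtain ⟨j, rfl | rfl⟩ := j.even_or_odd'
  · left
    rw [← mul_assoc, zpow_mul, zpow_order, one_zpow]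
  · right
    rw [mul_add, mul_one, ← mul_assoc, zpow_add, zpow_mul, zpow_order, one_zpow, one_mul]

namespace IsMetacyclicPair

theorem zpow_mul_self_sub_one (h : IsMetacyclicPair a x u k) : a ^ (u * u - 1) = 1 := by
  rw [zpow_sub_one, mul_inv_eq_one, ← conj_zpow_eq h.conj_eq, ← h.conj_eq]
  calc x * (x * a * x⁻¹) * x⁻¹ = x ^ 2 * a * (x ^ 2)⁻¹ := by rw [sq]; group
    _ = a := by rw [h.sq_eq]; group

theorem zpow_sub_one_mul (h : IsMetacyclicPair a x u k) : a ^ ((u - 1) * k) = 1 := by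
  rw [sub_one_mul, zpow_sub, mul_inv_eq_one, ← conj_zpow_eq h.conj_eq, ← h.sq_eq]
  group

theorem dihedral_or_quaternion_or_semidihedral {n : ℕ}
    (h : IsMetacyclicPair a x (4 * v - 1) k) (ha : orderOf a = 2 ^ (n + 1)) :
    (∃ m : ℕ, Nonempty (G ≃* DihedralGroup m)) ∨
    (∃ m : ℕ, Nonempty (G ≃* QuaternionGroup (2 ^ m))) ∨
    (∃ m : ℕ, Nonempty (G ≃* SemidihedralGroup m)) := by
  have odd_factor : Odd (2 * v - 1) := ⟨v - 1, by ring⟩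
  have four_mul_v : a ^ (4 * v) = 1 ∨ a ^ (4 * v) = a ^ (2 ^ n : ℤ) := by
    refine zpow_eq_one_or_eq_zpow_two_pow ha odd_factor ?_
    rw [← h.zpow_mul_self_sub_one]
    ring_nf
  have zpow_k : a ^ k = 1 ∨ a ^ k = a ^ (2 ^ n : ℤ) := by
    refine zpow_eq_one_or_eq_zpow_two_pow ha odd_factor ?_
    rw [← h.zpow_sub_one_mul]
    ring_nf
  have two_pow_sub_one : ((2 ^ (n + 2 - 2) - 1 : ℕ) : ℤ) = 2 ^ n - 1 := by
    simp [Nat.cast_sub Nat.one_le_two_pow]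
  rcases four_mul_v with hv | hv <;> rw [← zpow_zero a] at zpow_k <;> rcases zpow_k with hk | hk
  · exact .inl ⟨_, (h.congr (by simp [zpow_sub_one, hv]) hk).nonempty_mulEquiv_dihedralGroup⟩
  · refine .inr (.inl ⟨n, ?_⟩)
    have pair : IsMetacyclicPair a x (-1) (2 ^ n : ℕ) :=
      h.congr (by simp [zpow_sub_one, hv]) (by simp [hk])
    exact pair.nonempty_mulEquiv_quaternionGroup (ha.trans (pow_succ' 2 n))
  · refine .inr (.inr ⟨n + 2, nonempty_mulEquiv_semidihedralGroup (x := x) ?_ ha⟩)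
    rw [two_pow_sub_one]
    exact h.congr (by rw [zpow_sub_one, zpow_sub_one, hv]) hk
  · refine .inr (.inr ⟨n + 2, nonempty_mulEquiv_semidihedralGroup (x := x * a ^ (1 : ℤ)) ?_ ha⟩)
    rw [two_pow_sub_one]
    refine (h.mul_zpow 1).congr (by rw [zpow_sub_one, zpow_sub_one, hv]) ?_
    have two_pow_add_two_pow : a ^ ((2 : ℤ) ^ n + 2 ^ n) = 1 := by
      rw [← two_mul, ← pow_succ', zpow_two_pow_eq_one ha]
    rw [sub_add_cancel, mul_one, zpow_add, hv, hk, ← zpow_add, two_pow_add_two_pow, zpow_zero]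

end IsMetacyclicPair

end MetacyclicPairs

section PGroups

theorem mul_pow_mem_iff_of_mk_mem_center {G : Type*} [Group G] {N : Subgroup G} [N.Normal] {n : ℕ}
    {w : G} (hw : w ^ n ∈ N) (hcenter : (w : G ⧸ N) ∈ center (G ⧸ N)) (g : G) :
    (g * w) ^ n ∈ N ↔ g ^ n ∈ N := by
  have commute : Commute (g : G ⧸ N) w := mem_center_iff.1 hcenter g
  rw [← QuotientGroup.eq_one_iff] at hw
  rw [← QuotientGroup.eq_one_iff, ← QuotientGroup.eq_one_iff, QuotientGroup.mk_pow,
    QuotientGroup.mk_mul, commute.mul_pow, ← QuotientGroup.mk_pow, ← QuotientGroup.mk_pow, hw,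
    mul_one]

variable {G : Type*} [Group G] [Finite G] {p : ℕ} [Fact p.Prime]

theorem exists_mem_center_orderOf_eq_of_isPGroup (hp : IsPGroup p G) (N : Subgroup G) [N.Normal]
    (hN : N ≠ ⊥) : ∃ z ∈ N, z ∈ center G ∧ orderOf z = p := by
  have p_dvd_card : p ∣ Nat.card N :=
    (hp.to_subgroup N).card_eq_or_dvd.resolve_left (mt card_eq_one.1 hN)
  obtain ⟨⟨b, hbN⟩, hb_fixed, hb_ne⟩ :=
    (hp.of_equiv ConjAct.toConjAct).exists_fixed_point_of_prime_dvd_card_of_fixed_point N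
      p_dvd_card (a := 1) (fun g => smul_one g)
  have hb_center : b ∈ center G := mem_center_iff.2 fun g =>
    mul_inv_eq_iff_eq_mul.1 (congrArg Subtype.val (hb_fixed (ConjAct.toConjAct g)))
  have inf_ne_bot : N ⊓ center G ≠ ⊥ := fun h =>
    hb_ne (Subtype.ext (mem_bot.1 (h ▸ mem_inf.2 ⟨hbN, hb_center⟩)).symm)
  obtain ⟨z, hz⟩ := exists_prime_orderOf_dvd_card' (G := ↥(N ⊓ center G)) p
    ((hp.to_subgroup _).card_eq_or_dvd.resolve_left (mt card_eq_one.1 inf_ne_bot))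
  exact ⟨z, z.2.1, z.2.2, (orderOf_coe z).trans hz⟩

theorem exists_mem_notMem_mk_mem_center (hp : IsPGroup p G) (V C : Subgroup G) [V.Normal]
    [C.Normal] (hCV : ¬C ≤ V) :
    ∃ x ∈ C, x ∉ V ∧ x ^ p ∈ V ∧ (x : G ⧸ V) ∈ center (G ⧸ V) := by
  have map_normal : (C.map (QuotientGroup.mk' V)).Normal :=
    Normal.map ‹_› _ (QuotientGroup.mk'_surjective V)
  have map_ne_bot : C.map (QuotientGroup.mk' V) ≠ ⊥ := by
    rwa [Ne, Subgroup.map_eq_bot_iff, QuotientGroup.ker_mk']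
  obtain ⟨_, ⟨x, hxC, rfl⟩, hx_center, hx_order⟩ :=
    exists_mem_center_orderOf_eq_of_isPGroup (hp.to_quotient V) _ map_ne_bot
  refine ⟨x, hxC, fun hxV => ?_, ?_, hx_center⟩
  · rw [QuotientGroup.mk'_apply, (QuotientGroup.eq_one_iff x).2 hxV, orderOf_one] at hx_order
    exact (Fact.out : p.Prime).ne_one hx_order.symm
  · rw [← QuotientGroup.eq_one_iff, QuotientGroup.mk_pow, ← hx_order]
    exact pow_orderOf_eq_one _

theorem exists_card_eq_mul_card_of_not_le (hp : IsPGroup p G) {V C : Subgroup G} [V.Normal]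
    [C.Normal] (hVC : V ≤ C) (hCV : ¬C ≤ V) :
    ∃ W ≤ C, Nat.card W = p * Nat.card V ∧
      ∀ w ∈ W, w ^ p ∈ V ∧ (w : G ⧸ V) ∈ center (G ⧸ V) := by
  obtain ⟨x, hxC, hxV, hxp, hx_center⟩ := exists_mem_notMem_mk_mem_center hp V C hCV
  refine ⟨(zpowers (x : G ⧸ V)).comap (QuotientGroup.mk' V), fun w hw => ?_, ?_, fun w hw => ?_⟩
  · obtain ⟨i, hi⟩ := mem_zpowers_iff.1 (mem_comap.1 hw)
    have mem_V : (x ^ i)⁻¹ * w ∈ V := QuotientGroup.eq.1 hi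
    exact (Subgroup.mul_mem_cancel_left C (inv_mem (zpow_mem hxC i))).1 (hVC mem_V)
  · have order_eq : orderOf (x : G ⧸ V) = p :=
      orderOf_eq_prime ((QuotientGroup.eq_one_iff _).2 hxp) (mt (QuotientGroup.eq_one_iff x).1 hxV)
    rw [← order_eq, ← Nat.card_zpowers, mul_comm]
    exact QuotientGroup.card_preimage_mk V (zpowers (x : G ⧸ V) : Set (G ⧸ V))
  · obtain ⟨i, hi⟩ := mem_zpowers_iff.1 (mem_comap.1 hw)
    rw [QuotientGroup.mk'_apply] at hi
    refine ⟨(QuotientGroup.eq_one_iff _).1 ?_, hi ▸ zpow_mem hx_center i⟩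
    rw [QuotientGroup.mk_pow, ← hi, ← zpow_natCast, zpow_comm, zpow_natCast, ← QuotientGroup.mk_pow,
      (QuotientGroup.eq_one_iff _).2 hxp, one_zpow]

end PGroups

section NormalKleinFour

variable {G : Type*} [Group G] {a x y z : G} {n : ℕ}

theorem coe_closure_pair_of_sq_eq_one (hyz : Commute y z) (hy : y ^ 2 = 1) (hz : z ^ 2 = 1) :
    (closure {z, y} : Set G) = {1, z, y, y * z} := by
  have zpow_z (i : ℤ) : z ^ i = 1 ∨ z ^ i = z := by
    obtain ⟨i, rfl | rfl⟩ := i.even_or_odd'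
    · exact .inl (by rw [zpow_mul, zpow_ofNat, hz, one_zpow])
    · exact .inr (by rw [zpow_add_one, zpow_mul, zpow_ofNat, hz, one_zpow, one_mul])
  ext g
  constructor
  · intro hg
    have conj_z : y * z * y⁻¹ = z ^ (1 : ℤ) := by rw [hyz.eq]; group
    obtain ⟨i, rfl | rfl⟩ :=
      exists_zpow_of_mem_closure conj_z (hy.trans (zpow_zero z).symm) hg
    all_goals rcases zpow_z i with h | h <;> simp [h]
  · have mem_z : z ∈ closure {z, y} := subset_closure (.inl rfl)
    have mem_y : y ∈ closure {z, y} := subset_closure (.inr rfl)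
    rintro (rfl | rfl | rfl | rfl)
    exacts [one_mem _, mem_z, mem_y, mul_mem mem_y mem_z]

theorem isKleinFour_closure_pair (hyz : Commute y z) (hy : y ^ 2 = 1) (hz : z ^ 2 = 1)
    (hy1 : y ≠ 1) (hz1 : z ≠ 1) (hne : y ≠ z) : IsKleinFour (closure {z, y}) where
  card_four := by
    have z_inv : z⁻¹ = z := inv_eq_of_mul_eq_one_left ((sq z).symm.trans hz)
    have mul_ne_one : y * z ≠ 1 := by rwa [Ne, mul_eq_one_iff_eq_inv, z_inv]
    rw [← SetLike.coe_sort_coe, coe_closure_pair_of_sq_eq_one hyz hy hz, Nat.card_coe_set_eq,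
      Set.ncard_insert_of_notMem, Set.ncard_insert_of_notMem, Set.ncard_pair] <;>
    simp [hy1, hz1, hne.symm, hz1.symm, hy1.symm, mul_ne_one.symm]
  exponent_two := by
    have : Nontrivial (closure {z, y}) :=
      ⟨1, ⟨z, subset_closure (.inl rfl)⟩, fun h => hz1 (congrArg Subtype.val h).symm⟩
    refine (Monoid.exponent_eq_prime_iff Nat.prime_two).2 fun g hg => orderOf_eq_prime ?_ hg
    have hg_mem : (g : G) ∈ ({1, z, y, y * z} : Set G) :=
      coe_closure_pair_of_sq_eq_one hyz hy hz ▸ g.2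
    simp only [Set.mem_insert_iff, Set.mem_singleton_iff] at hg_mem
    refine Subtype.ext ?_
    rcases hg_mem with h | h | h | h <;> simp [h, hy, hz, hyz.mul_pow]

theorem exists_normal_isKleinFour (hz : z ∈ center G) (hz2 : z ^ 2 = 1) (hz1 : z ≠ 1)
    (hy2 : y ^ 2 = 1) (hy1 : y ≠ 1) (hyz : y ≠ z)
    (hconj : ∀ g, g * y * g⁻¹ = y ∨ g * y * g⁻¹ = y * z) :
    ∃ V : Subgroup G, V.Normal ∧ IsKleinFour V := by
  refine ⟨closure {z, y}, ⟨fun h hh g => ?_⟩,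
    isKleinFour_closure_pair (mem_center_iff.1 hz y) hy2 hz2 hy1 hz1 hyz⟩
  have mem_z : z ∈ closure {z, y} := subset_closure (.inl rfl)
  have mem_y : y ∈ closure {z, y} := subset_closure (.inr rfl)
  have closure_le_comap :
      closure {z, y} ≤ (closure {z, y}).comap (MulAut.conj g).toMonoidHom := by
    refine (closure_le _).2 (Set.pair_subset ?_ ?_)
    · change g * z * g⁻¹ ∈ closure {z, y}
      rwa [mem_center_iff.1 hz g, mul_inv_cancel_right]
    · change g * y * g⁻¹ ∈ closure {z, y}
      rcases hconj g with h | h <;> rw [h]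
      exacts [mem_y, mul_mem mem_y mem_z]
  exact closure_le_comap hh

end NormalKleinFour

section MaximalNormalCyclic

variable {G : Type*} [Group G] {a x y : G} {n : ℕ} {u v l : ℤ}

theorem zpow_two_pow_ne_one (ha : orderOf a = 2 ^ (n + 1)) : a ^ (2 ^ n : ℤ) ≠ 1 := by
  have two_pow_lt : 2 ^ n < orderOf a := ha ▸ Nat.pow_lt_pow_right one_lt_two n.lt_succ_self
  exact_mod_cast pow_ne_one_of_lt_orderOf (by positivity) two_pow_lt

theorem odd_of_conj_eq_zpow (ha : orderOf a = 2 ^ (n + 1)) (h : x * a * x⁻¹ = a ^ v) : Odd v := by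
  by_contra hv
  obtain ⟨w, rfl⟩ := even_iff_two_dvd.1 (Int.not_odd_iff_even.1 hv)
  have zpow_order : a ^ (2 * 2 ^ n : ℤ) = 1 := by
    rw [← pow_succ', zpow_two_pow_eq_one ha]
  have conj_eq_one : x * a ^ (2 ^ n : ℤ) * x⁻¹ = 1 := by
    rw [conj_zpow_eq h, mul_right_comm, zpow_mul, zpow_order, one_zpow]
  exact zpow_two_pow_ne_one ha (conj_eq_one_iff.1 conj_eq_one)

theorem zpow_two_pow_mem_center [hA : (zpowers a).Normal] (ha : orderOf a = 2 ^ (n + 1)) :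
    a ^ (2 ^ n : ℤ) ∈ center G := by
  refine mem_center_iff.2 fun g => ?_
  obtain ⟨v, hv⟩ := mem_zpowers_iff.1 (hA.conj_mem a (mem_zpowers a) g)
  obtain ⟨w, rfl⟩ := odd_of_conj_eq_zpow ha hv.symm
  have zpow_order : a ^ (2 * 2 ^ n : ℤ) = 1 := by
    rw [← pow_succ', zpow_two_pow_eq_one ha]
  rw [← mul_inv_eq_iff_eq_mul, conj_zpow_eq hv.symm, add_mul, one_mul, mul_right_comm, zpow_add,
    zpow_mul, zpow_order, one_zpow, one_mul]

theorem exists_conj_eq_mul_zpow [(zpowers a).Normal]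
    (hy : (y : G ⧸ zpowers a) ∈ center (G ⧸ zpowers a)) (g : G) :
    ∃ m : ℤ, g * y * g⁻¹ = y * a ^ m := by
  have mk_eq : (y : G ⧸ zpowers a) = ((g * y * g⁻¹ : G) : G ⧸ zpowers a) := by
    exact (mul_inv_eq_of_eq_mul (mem_center_iff.1 hy g)).symm
  obtain ⟨m, hm⟩ := mem_zpowers_iff.1 (QuotientGroup.eq.1 mk_eq)
  exact ⟨m, by rw [hm, mul_inv_cancel_left]⟩

theorem exists_normal_isKleinFour_of_sq_eq_one [(zpowers a).Normal] (ha : orderOf a = 2 ^ (n + 1))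
    (hy : y ∉ zpowers a) (hy2 : y ^ 2 = 1) (hya : y * a * y⁻¹ = a ^ (1 + 4 * u))
    (hcenter : (y : G ⧸ zpowers a) ∈ center (G ⧸ zpowers a)) :
    ∃ V : Subgroup G, V.Normal ∧ IsKleinFour V := by
  have z_sq : (a ^ (2 ^ n : ℤ)) ^ 2 = 1 := by
    rw [← zpow_natCast, ← zpow_mul, Nat.cast_ofNat, ← pow_succ, zpow_two_pow_eq_one ha]
  refine exists_normal_isKleinFour (y := y) (zpow_two_pow_mem_center ha) z_sq
    (zpow_two_pow_ne_one ha) hy2 (fun h => hy (h ▸ one_mem _))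
    (fun h => hy (h ▸ zpow_mem_zpowers a _)) fun g => ?_
  obtain ⟨m, hm⟩ := exists_conj_eq_mul_zpow hcenter g
  have mul_sq : (y * a ^ m) ^ 2 = 1 := by rw [← hm, conj_pow, hy2, mul_one, mul_inv_cancel]
  have zpow_m : a ^ m = 1 ∨ a ^ m = a ^ (2 ^ n : ℤ) := by
    refine zpow_eq_one_or_eq_zpow_two_pow ha (t := 1 + 2 * u) ⟨u, add_comm _ _⟩ ?_
    rw [← mul_sq, mul_zpow_sq hya (hy2.trans (zpow_zero a).symm)]
    ring_nf
  rw [hm]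
  rcases zpow_m with h | h <;> simp [h]

theorem exists_mul_zpow_sq_eq_one (ha : orderOf a = 2 ^ (n + 1))
    (hxa : x * a * x⁻¹ = a ^ (1 + 4 * u)) (hx2 : x ^ 2 = a ^ (2 * l)) :
    ∃ m : ℤ, (x * a ^ m) ^ 2 = 1 := by
  have odd_factor : Odd (1 + 2 * u) := ⟨u, add_comm _ _⟩
  obtain ⟨s, t, hst⟩ : IsCoprime (1 + 2 * u) (2 ^ n : ℤ) :=
    (Int.isCoprime_two_right.2 odd_factor).pow_right
  have exponent_eq : (1 + 4 * u + 1) * (-l * s) + 2 * l = 2 ^ (n + 1) * (l * t) := by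
    linear_combination -2 * l * hst
  refine ⟨-l * s, ?_⟩
  rw [mul_zpow_sq hxa hx2, exponent_eq, zpow_mul, zpow_two_pow_eq_one ha, one_zpow]

theorem exists_normal_isKleinFour_of_notMem_zpowers [hA : (zpowers a).Normal]
    (ha : orderOf a = 2 ^ (n + 1)) (hx : x ∉ zpowers a) (hx2 : x ^ 2 ∈ zpowers a)
    (hax : a ∉ zpowers x) (hxa : x * a * x⁻¹ = a ^ (1 + 4 * u))
    (hcenter : (x : G ⧸ zpowers a) ∈ center (G ⧸ zpowers a)) :
    ∃ V : Subgroup G, V.Normal ∧ IsKleinFour V := by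
  obtain ⟨k, hk⟩ := mem_zpowers_iff.1 hx2
  have even_k : Even k := by
    by_contra hodd
    have a_mem : a ∈ zpowers (a ^ k) := by
      rw [mem_zpowers_zpow_iff, ha]
      exact Int.isCoprime_iff_gcd_eq_one.1
        (by exact_mod_cast (Int.isCoprime_two_right.2 (Int.not_even_iff_odd.1 hodd)).pow_right)
    exact hax (zpowers_le.2 (hk ▸ pow_mem (mem_zpowers x) 2) a_mem)
  obtain ⟨l, rfl⟩ := even_iff_two_dvd.1 even_k
  obtain ⟨m, hm⟩ := exists_mul_zpow_sq_eq_one ha hxa hk.symm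
  refine exists_normal_isKleinFour_of_sq_eq_one (y := x * a ^ m) (u := u) ha ?_ hm ?_ ?_
  · rwa [Subgroup.mul_mem_cancel_right _ (zpow_mem_zpowers a m)]
  · rw [← hxa]
    group
  · rwa [QuotientGroup.mk_mul_of_mem _ (zpow_mem_zpowers a m)]

theorem normal_centralizer_singleton (ha : (zpowers a).Normal) :
    (centralizer ({a} : Set G)).Normal := by
  rw [← centralizer_closure, ← zpowers_eq_closure]
  infer_instance

instance normal_zpowers_pow [hA : (zpowers a).Normal] (k : ℕ) : (zpowers (a ^ k)).Normal := by
  refine ⟨fun b hb g => ?_⟩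
  obtain ⟨i, rfl⟩ := mem_zpowers_iff.1 hb
  obtain ⟨v, hv⟩ := mem_zpowers_iff.1 (hA.conj_mem a (mem_zpowers a) g)
  refine mem_zpowers_iff.2 ⟨v * i, ?_⟩
  rw [← zpow_natCast, ← zpow_mul, ← zpow_mul, conj_zpow_eq hv.symm, mul_left_comm]

/-- The elements of `G` acting trivially by conjugation on `⟨a⟩ / ⟨a⁴⟩`, that is, those acting on
`⟨a⟩` by an exponent congruent to `1` modulo `4`. -/
def centralizerModFour (a : G) [(zpowers a).Normal] : Subgroup G :=
  (centralizer {(a : G ⧸ zpowers (a ^ 4))}).comap (QuotientGroup.mk' (zpowers (a ^ 4)))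

instance centralizerModFour.normal [hA : (zpowers a).Normal] : (centralizerModFour a).Normal := by
  have map_normal : ((zpowers a).map (QuotientGroup.mk' (zpowers (a ^ 4)))).Normal :=
    hA.map _ (QuotientGroup.mk'_surjective _)
  rw [MonoidHom.map_zpowers] at map_normal
  exact (normal_centralizer_singleton map_normal).comap _

theorem mem_centralizerModFour_iff [(zpowers a).Normal] :
    x ∈ centralizerModFour a ↔ ∃ u : ℤ, x * a * x⁻¹ = a ^ (1 + 4 * u) := by
  have mem_iff_mk_eq : x ∈ centralizerModFour a ↔
      (a : G ⧸ zpowers (a ^ 4)) = ((x * a * x⁻¹ : G) : G ⧸ zpowers (a ^ 4)) := by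
    rw [centralizerModFour, mem_comap, mem_centralizer_singleton_iff, QuotientGroup.mk_mul,
      QuotientGroup.mk_mul, QuotientGroup.mk_inv, eq_mul_inv_iff_mul_eq, eq_comm]
    rfl
  rw [mem_iff_mk_eq, QuotientGroup.eq, mem_zpowers_iff]
  refine exists_congr fun u => ?_
  rw [eq_inv_mul_iff_mul_eq, zpow_one_add, zpow_mul, zpow_ofNat, eq_comm]

theorem centralizerModFour_le_zpowers [Finite G] (h2 : IsPGroup 2 G) [hA : (zpowers a).Normal]
    (hmax : Maximal (fun H : Subgroup G => H.Normal ∧ IsCyclic H) (zpowers a))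
    (hV : ¬∃ V : Subgroup G, V.Normal ∧ IsKleinFour V) :
    centralizerModFour a ≤ zpowers a := by
  by_contra hle
  obtain ⟨x, hxK, hx, hx2, hcenter⟩ := exists_mem_notMem_mk_mem_center h2 _ _ hle
  obtain ⟨u, hu⟩ := mem_centralizerModFour_iff.1 hxK
  by_cases hax : a ∈ zpowers x
  · have zpowers_x_normal : (zpowers x).Normal := by
      refine ⟨fun b hb g => ?_⟩
      obtain ⟨i, rfl⟩ := mem_zpowers_iff.1 hb
      obtain ⟨m, hm⟩ := exists_conj_eq_mul_zpow hcenter g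
      rw [← conj_zpow, hm]
      exact zpow_mem (mul_mem (mem_zpowers x) (zpow_mem hax m)) i
    exact hx (hmax.le_of_ge ⟨zpowers_x_normal, inferInstance⟩ (zpowers_le.2 hax) (mem_zpowers x))
  · obtain ⟨n, hn⟩ := IsPGroup.iff_orderOf.1 h2 a
    cases n with
    | zero =>
      rw [pow_zero, orderOf_eq_one_iff] at hn
      exact hax (hn ▸ one_mem _)
    | succ n => exact hV (exists_normal_isKleinFour_of_notMem_zpowers hn hx hx2 hax hu hcenter)

theorem exists_conj_eq_zpow_four_mul_sub_one [Finite G] (h2 : IsPGroup 2 G)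
    [hA : (zpowers a).Normal] (hx : x ∉ centralizerModFour a) :
    ∃ v : ℤ, x * a * x⁻¹ = a ^ (4 * v - 1) := by
  rw [mem_centralizerModFour_iff] at hx
  obtain ⟨w, hw⟩ := mem_zpowers_iff.1 (hA.conj_mem a (mem_zpowers a) x)
  obtain ⟨n, hn⟩ := IsPGroup.iff_orderOf.1 h2 a
  cases n with
  | zero =>
    rw [pow_zero, orderOf_eq_one_iff] at hn
    exact absurd ⟨0, by simp [hn]⟩ hx
  | succ n =>
    obtain ⟨j, rfl⟩ := odd_of_conj_eq_zpow hn hw.symm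
    obtain ⟨i, rfl | rfl⟩ := j.even_or_odd'
    · exact absurd ⟨i, by rw [← hw]; ring_nf⟩ hx
    · exact ⟨i + 1, by rw [← hw]; ring_nf⟩

theorem mul_mem_centralizerModFour [Finite G] (h2 : IsPGroup 2 G) [(zpowers a).Normal]
    (hx : x ∉ centralizerModFour a) (hy : y ∉ centralizerModFour a) :
    x * y ∈ centralizerModFour a := by
  obtain ⟨v, hv⟩ := exists_conj_eq_zpow_four_mul_sub_one h2 hx
  obtain ⟨w, hw⟩ := exists_conj_eq_zpow_four_mul_sub_one h2 hy
  refine mem_centralizerModFour_iff.2 ⟨4 * v * w - v - w, ?_⟩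
  calc x * y * a * (x * y)⁻¹ = x * (y * a * y⁻¹) * x⁻¹ := by group
    _ = a ^ (1 + 4 * (4 * v * w - v - w)) := by
      rw [hw, conj_zpow_eq hv]
      ring_nf

theorem exists_isMetacyclicPair [Finite G] (h2 : IsPGroup 2 G) [(zpowers a).Normal]
    (hK : centralizerModFour a ≤ zpowers a) (hx : x ∉ zpowers a) :
    ∃ v k : ℤ, IsMetacyclicPair a x (4 * v - 1) k := by
  have mul_mem {g h : G} (hg : g ∉ zpowers a) (hh : h ∉ zpowers a) : g * h ∈ zpowers a :=
    hK (mul_mem_centralizerModFour h2 (mt (@hK g) hg) (mt (@hK h) hh))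
  have index_eq_two : (zpowers a).index = 2 :=
    index_eq_two_iff_exists_notMem_and.2 ⟨x, hx, fun b => or_iff_not_imp_right.2 (mul_mem · hx)⟩
  obtain ⟨v, hv⟩ := exists_conj_eq_zpow_four_mul_sub_one h2 (mt (@hK x) hx)
  obtain ⟨k, hk⟩ := mem_zpowers_iff.1 (mul_mem hx hx)
  exact ⟨v, k, .of_index_eq_two index_eq_two hx hv ((sq x).trans hk.symm)⟩

theorem cyclic_or_dihedral_or_quaternion_or_semidihedral [Finite G] (h2 : IsPGroup 2 G)
    (hV : ¬∃ V : Subgroup G, V.Normal ∧ IsKleinFour V) :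
    IsCyclic G ∨
    (∃ m : ℕ, Nonempty (G ≃* DihedralGroup m)) ∨
    (∃ m : ℕ, Nonempty (G ≃* QuaternionGroup (2 ^ m))) ∨
    (∃ m : ℕ, Nonempty (G ≃* SemidihedralGroup m)) := by
  obtain ⟨A, -, hmax⟩ := Finite.exists_le_maximal
    (p := fun H : Subgroup G => H.Normal ∧ IsCyclic H) (a := ⊥) ⟨inferInstance, inferInstance⟩
  obtain ⟨a, rfl⟩ := A.isCyclic_iff_exists_zpowers_eq_top.1 hmax.prop.2
  have := hmax.prop.1
  have hK := centralizerModFour_le_zpowers h2 hmax hV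
  by_cases hA : ∀ x, x ∈ zpowers a
  · exact .inl ⟨a, hA⟩
  · right
    obtain ⟨x, hx⟩ := not_forall.1 hA
    obtain ⟨v, k, pair⟩ := exists_isMetacyclicPair h2 hK hx
    obtain ⟨n, hn⟩ := IsPGroup.iff_orderOf.1 h2 a
    cases n with
    | zero =>
      rw [pow_zero, orderOf_eq_one_iff] at hn
      exact absurd (hK (mem_centralizerModFour_iff.2 ⟨0, by simp [hn]⟩)) hx
    | succ n => exact pair.dihedral_or_quaternion_or_semidihedral hn

end MaximalNormalCyclic

section Counting

variable {G : Type*} [Group G]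

open scoped Pointwise in
theorem card_dvd_ncard_of_mul_mem (W : Subgroup G) {S : Set G}
    (hS : ∀ g ∈ S, ∀ w ∈ W, g * w ∈ S) : Nat.card W ∣ S.ncard := by
  have mul_eq : S * (W : Set G) = S :=
    (Set.mul_subset_iff.2 hS).antisymm (Set.subset_mul_left S W.one_mem)
  have card_mul := card_mul_eq_card_subgroup_mul_card_quotient W S
  rw [mul_eq, Nat.card_coe_set_eq] at card_mul
  exact Dvd.intro _ card_mul.symm

theorem card_subtype_orderOf_eq_card [Finite G] [IsCyclic G] :
    Nat.card {g : G // orderOf g = Nat.card G} = (Nat.card G).totient := by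
  have := Fintype.ofFinite G
  rw [← IsCyclic.card_orderOf_eq_totient (α := G) (by rw [Nat.card_eq_fintype_card]),
    Nat.card_eq_fintype_card, Fintype.card_subtype]

theorem card_orderOf_eq_totient_mul_card_cyclic [Finite G] (n : ℕ) :
    Nat.card {g : G // orderOf g = n} =
      n.totient * Nat.card {H : Subgroup G // IsCyclic H ∧ Nat.card H = n} := by
  let f (g : {g : G // orderOf g = n}) : {H : Subgroup G // IsCyclic H ∧ Nat.card H = n} :=
    ⟨zpowers g.1, inferInstance, (Nat.card_zpowers g.1).trans g.2⟩
  have card_fiber (H : {H : Subgroup G // IsCyclic H ∧ Nat.card H = n}) :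
      Nat.card {g // f g = H} = n.totient := by
    obtain ⟨H, hH, rfl⟩ := H
    rw [← card_subtype_orderOf_eq_card]
    refine Nat.card_congr
      { toFun := fun g => ⟨⟨g.1, (congrArg Subtype.val g.2).le (mem_zpowers g.1.1)⟩, ?_⟩
        invFun := fun h => ⟨⟨h.1, (orderOf_coe h.1).trans h.2⟩, Subtype.ext ?_⟩ }
    · exact (orderOf_mk _ _).trans g.1.2
    · refine eq_of_le_of_card_ge (zpowers_le.2 h.1.2) ?_
      rw [Nat.card_zpowers, orderOf_coe, h.2]
  have := Fintype.ofFinite {H : Subgroup G // IsCyclic H ∧ Nat.card H = n}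
  rw [Nat.card_congr (Equiv.sigmaFiberEquiv f).symm, Nat.card_sigma,
    Fintype.sum_congr _ _ card_fiber, Finset.sum_const, Finset.card_univ, smul_eq_mul, mul_comm,
    Nat.card_eq_fintype_card]

end Counting

/-- `z` and `y` are distinct nontrivial elements of `V` and `z` is central in `G`. For a Klein
four-subgroup `V` this means `V = {1, z, y, y * z}`. -/
structure IsCentralBasis {G : Type*} [Group G] (V : Subgroup G) (z y : G) : Prop where
  z_mem : z ∈ V
  z_mem_center : z ∈ center G
  z_ne_one : z ≠ 1
  y_mem : y ∈ V
  y_ne_one : y ≠ 1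
  y_ne_z : y ≠ z

section CountingOrderFour

variable {G : Type*} [Group G] {V : Subgroup G} [IsKleinFour V] {g h v y z : G}

theorem sq_eq_one_of_mem_isKleinFour (hv : v ∈ V) : v ^ 2 = 1 :=
  (sq v).trans (congrArg Subtype.val (IsKleinFour.mul_self (⟨v, hv⟩ : V)))

theorem le_centralizer_of_isKleinFour : V ≤ centralizer (V : Set G) := by
  have : IsMulCommutative V := IsKleinFour.isMulCommutative
  exact le_centralizer V

theorem mul_sq_of_mem_centralizer (hg : g ∈ centralizer (V : Set G)) (hv : v ∈ V) :
    (g * v) ^ 2 = g ^ 2 := by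
  have hgv : Commute g v := (Subgroup.mem_centralizer_iff.1 hg v hv).symm
  rw [hgv.mul_pow, sq_eq_one_of_mem_isKleinFour hv, mul_one]

theorem exists_isCentralBasis [Finite G] [V.Normal] (h2 : IsPGroup 2 G) :
    ∃ z y, IsCentralBasis V z y := by
  have V_ne_bot : V ≠ ⊥ := by
    rintro rfl
    simpa using IsKleinFour.card_four (G := (⊥ : Subgroup G))
  obtain ⟨z, hz, hz_center, hz_order⟩ := exists_mem_center_orderOf_eq_of_isPGroup h2 V V_ne_bot
  have card_lt : ({1, z} : Set G).ncard < (V : Set G).ncard := by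
    refine (Set.ncard_insert_le _ _).trans_lt ?_
    rw [Set.ncard_singleton, ← Nat.card_coe_set_eq, SetLike.coe_sort_coe, IsKleinFour.card_four]
    norm_num
  obtain ⟨y, hy, hy_notMem⟩ := Set.exists_mem_notMem_of_ncard_lt_ncard card_lt
  refine ⟨z, y, hz, hz_center, ?_, hy, fun h => hy_notMem (.inl h), fun h => hy_notMem (.inr h)⟩
  rintro rfl
  simp at hz_order

namespace IsCentralBasis

theorem eq_of_mem (hzy : IsCentralBasis V z y) (hv : v ∈ V) :
    v = 1 ∨ v = z ∨ v = y ∨ v = y * z := by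
  by_contra! hne
  obtain ⟨h1, hz, hy, hyz⟩ := hne
  refine hyz (congrArg Subtype.val (IsKleinFour.eq_mul_of_ne_all (G := V) (x := ⟨y, hzy.y_mem⟩)
    (y := ⟨z, hzy.z_mem⟩) (z := ⟨v, hv⟩) ?_ ?_ ?_ ?_ ?_ ?_))
  all_goals simp [Subtype.ext_iff, hzy.y_ne_one, hzy.z_ne_one, hzy.y_ne_z, h1, hz, hy]

theorem mem_centralizer_iff (hzy : IsCentralBasis V z y) :
    g ∈ centralizer (V : Set G) ↔ Commute g y := by
  refine ⟨fun hg => (Subgroup.mem_centralizer_iff.1 hg y hzy.y_mem).symm, fun hgy => ?_⟩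
  have hgz : Commute g z := mem_center_iff.1 hzy.z_mem_center g
  refine Subgroup.mem_centralizer_iff.2 fun v hv => ?_
  rcases hzy.eq_of_mem hv with rfl | rfl | rfl | rfl
  exacts [(Commute.one_right g).symm, hgz.symm, hgy.symm, (hgy.mul_right hgz).symm]

theorem sq_eq_one_or_eq (hzy : IsCentralBasis V z y) (hg : g ∉ centralizer (V : Set G))
    (hg2 : g ^ 2 ∈ V) : g ^ 2 = 1 ∨ g ^ 2 = z := by
  have hgz : Commute g z := mem_center_iff.1 hzy.z_mem_center g
  have hgg : Commute g (g ^ 2) := (Commute.refl g).pow_right 2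
  rcases hzy.eq_of_mem hg2 with h | h | h | h
  · exact .inl h
  · exact .inr h
  · exact absurd (hzy.mem_centralizer_iff.2 (h ▸ hgg)) hg
  · refine absurd (hzy.mem_centralizer_iff.2 ?_) hg
    rw [h] at hgg
    simpa using hgg.mul_right hgz.inv_right

variable [V.Normal]

theorem conj_eq_mul (hzy : IsCentralBasis V z y) (hg : g ∉ centralizer (V : Set G)) :
    g * y * g⁻¹ = y * z := by
  rcases hzy.eq_of_mem (Normal.conj_mem ‹_› y hzy.y_mem g) with h | h | h | h
  · exact absurd (conj_eq_one_iff.1 h) hzy.y_ne_one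
  · rw [mul_inv_eq_iff_eq_mul, ← mem_center_iff.1 hzy.z_mem_center g] at h
    exact absurd (mul_left_cancel h) hzy.y_ne_z
  · exact absurd (hzy.mem_centralizer_iff.2 (mul_inv_eq_iff_eq_mul.1 h)) hg
  · exact h

theorem mul_mem_centralizer (hzy : IsCentralBasis V z y) (hg : g ∉ centralizer (V : Set G))
    (hh : h ∉ centralizer (V : Set G)) : g * h ∈ centralizer (V : Set G) := by
  rw [hzy.mem_centralizer_iff, commute_iff_eq, ← mul_inv_eq_iff_eq_mul]
  calc g * h * y * (g * h)⁻¹ = g * (h * y * h⁻¹) * g⁻¹ := by group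
    _ = g * y * g⁻¹ * (g * z * g⁻¹) := by rw [hzy.conj_eq_mul hh]; group
    _ = y * z ^ 2 := by
      rw [hzy.conj_eq_mul hg, mem_center_iff.1 hzy.z_mem_center g, mul_inv_cancel_right, mul_assoc,
        sq]
    _ = y := by rw [sq_eq_one_of_mem_isKleinFour hzy.z_mem, mul_one]

theorem mul_sq (hzy : IsCentralBasis V z y) (hg : g ∉ centralizer (V : Set G)) :
    (g * y) ^ 2 = g ^ 2 * z := by
  have hy2 := sq_eq_one_of_mem_isKleinFour hzy.y_mem
  calc (g * y) ^ 2 = g * y * g⁻¹ * g ^ 2 * y := by rw [sq]; group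
    _ = y * (g ^ 2 * y) * z := by
      rw [hzy.conj_eq_mul hg, mul_assoc y z, ← mem_center_iff.1 hzy.z_mem_center,
        mul_assoc, mul_assoc, ← mem_center_iff.1 hzy.z_mem_center, mul_assoc, mul_assoc]
    _ = y * (y * g ^ 2) * z := by
      rw [(hzy.mem_centralizer_iff.1 (sq g ▸ hzy.mul_mem_centralizer hg hg)).eq]
    _ = g ^ 2 * z := by rw [← mul_assoc, ← sq, hy2, one_mul]

theorem mul_pow_four (hzy : IsCentralBasis V z y) (g : G) (hv : v ∈ V) :
    (g * v) ^ 4 = g ^ 4 := by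
  have sq_mem : g ^ 2 ∈ centralizer (V : Set G) := by
    by_cases hg : g ∈ centralizer (V : Set G)
    · exact pow_mem hg 2
    · exact sq g ▸ hzy.mul_mem_centralizer hg hg
  have conj_mem : g⁻¹ * v * g ∈ V := Normal.conj_mem' ‹_› v hv g
  calc (g * v) ^ 4 = ((g * v) ^ 2) ^ 2 := pow_mul _ 2 2
    _ = (g ^ 2 * (g⁻¹ * v * g * v)) ^ 2 := by rw [sq (g * v), sq g]; group
    _ = g ^ 4 := by rw [mul_sq_of_mem_centralizer sq_mem (mul_mem conj_mem hv), ← pow_mul]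

theorem four_dvd_ncard_orderOf_eq_four_and (hzy : IsCentralBasis V z y) :
    4 ∣ {g : G | orderOf g = 4 ∧ (g ∈ centralizer (V : Set G) ∨ g ^ 2 ∉ V)}.ncard := by
  refine (IsKleinFour.card_four (G := V)).symm.dvd.trans
    (card_dvd_ncard_of_mul_mem V fun g hg v hv => ?_)
  obtain ⟨g_order, hg⟩ := hg
  have pow_four : (g * v) ^ 4 = 1 := by
    rw [hzy.mul_pow_four g hv, ← g_order, pow_orderOf_eq_one]
  have orderOf_eq (h : (g * v) ^ 2 ≠ 1) : orderOf (g * v) = 4 :=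
    orderOf_eq_prime_pow (p := 2) (n := 1) h pow_four
  rcases hg with hg | hg
  · refine ⟨orderOf_eq ?_, .inl (mul_mem hg (le_centralizer_of_isKleinFour hv))⟩
    rw [mul_sq_of_mem_centralizer hg hv]
    exact pow_ne_one_of_lt_orderOf two_ne_zero (by omega)
  · have mk_mem_center : (v : G ⧸ V) ∈ center (G ⧸ V) := by
      rw [(QuotientGroup.eq_one_iff v).2 hv]
      exact one_mem _
    have sq_notMem : (g * v) ^ 2 ∉ V :=
      mt (mul_pow_mem_iff_of_mk_mem_center (pow_mem hv 2) mk_mem_center g).1 hg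
    exact ⟨orderOf_eq fun h => sq_notMem (h ▸ one_mem V), .inr sq_notMem⟩

theorem index_centralizer (hzy : IsCentralBasis V z y) (hg : g ∉ centralizer (V : Set G)) :
    (centralizer (V : Set G)).index = 2 :=
  index_eq_two_iff_exists_notMem_and.2
    ⟨g, hg, fun _ => or_iff_not_imp_right.2 (hzy.mul_mem_centralizer · hg)⟩

theorem nonempty_mulEquiv_dihedralGroup_four (hzy : IsCentralBasis V z y)
    (hV : centralizer (V : Set G) ≤ V) {r : G} (hr : orderOf r = 4) :
    Nonempty (G ≃* DihedralGroup 4) := by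
  have r_sq_ne_one : r ^ 2 ≠ 1 := pow_ne_one_of_lt_orderOf two_ne_zero (by omega)
  have r_notMem : r ∉ centralizer (V : Set G) :=
    fun h => r_sq_ne_one (sq_eq_one_of_mem_isKleinFour (hV h))
  have V_index : V.index = 2 := by
    rw [le_antisymm le_centralizer_of_isKleinFour hV, hzy.index_centralizer r_notMem]
  have r_index : (zpowers r).index = 2 := by
    have card_eq := (zpowers r).card_mul_index
    rw [← V.card_mul_index, V_index, IsKleinFour.card_four (G := V), Nat.card_zpowers,
      hr] at card_eq
    omega
  have r_sq_mem : r ^ 2 ∈ V := hV (sq r ▸ hzy.mul_mem_centralizer r_notMem r_notMem)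
  have r_sq : r ^ 2 = z :=
    (hzy.sq_eq_one_or_eq r_notMem r_sq_mem).resolve_left r_sq_ne_one
  have y_notMem : y ∉ zpowers r := fun h => r_notMem <| hzy.mem_centralizer_iff.2 <| by
    obtain ⟨i, rfl⟩ := mem_zpowers_iff.1 h
    exact (Commute.refl r).zpow_right i
  have conj_r : y * r * y⁻¹ = r ^ (-1 : ℤ) := by
    have conj_y := hzy.conj_eq_mul r_notMem
    rw [← r_sq] at conj_y
    have pow_four : r ^ 2 * r ^ 2 = 1 := by
      rw [r_sq, ← sq, sq_eq_one_of_mem_isKleinFour hzy.z_mem]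
    calc y * r * y⁻¹ = r⁻¹ * (r * y * r⁻¹) * r ^ 2 * y⁻¹ := by rw [sq]; group
      _ = r⁻¹ * (y * (r ^ 2 * r ^ 2) * y⁻¹) := by rw [conj_y]; simp only [mul_assoc]
      _ = r ^ (-1 : ℤ) := by rw [pow_four]; group
  have y_sq : y ^ 2 = r ^ (0 : ℤ) := by
    rw [zpow_zero, sq_eq_one_of_mem_isKleinFour hzy.y_mem]
  exact hr ▸ (IsMetacyclicPair.of_index_eq_two r_index y_notMem conj_r
    y_sq).nonempty_mulEquiv_dihedralGroup

variable [Finite G]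

theorem ncard_sq_mem_eq_two_mul_ncard_sq_eq (hzy : IsCentralBasis V z y) :
    {g : G | g ∉ centralizer (V : Set G) ∧ g ^ 2 ∈ V}.ncard =
      2 * {g : G | g ∉ centralizer (V : Set G) ∧ g ^ 2 = z}.ncard := by
  have union_eq : {g : G | g ∉ centralizer (V : Set G) ∧ g ^ 2 ∈ V} =
      {g | g ∉ centralizer (V : Set G) ∧ g ^ 2 = z} ∪
        {g | g ∉ centralizer (V : Set G) ∧ g ^ 2 = 1} := by
    ext g
    simp only [Set.mem_union, Set.mem_ofPred_eq, ← and_or_left]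
    refine and_congr_right fun hg => ⟨fun h => (hzy.sq_eq_one_or_eq hg h).symm, ?_⟩
    rintro (h | h) <;> rw [h]
    exacts [hzy.z_mem, one_mem V]
  have disjoint : Disjoint {g : G | g ∉ centralizer (V : Set G) ∧ g ^ 2 = z}
      {g | g ∉ centralizer (V : Set G) ∧ g ^ 2 = 1} :=
    Set.disjoint_left.2 fun g hz h1 => hzy.z_ne_one (hz.2.symm.trans h1.2)
  have image_eq : Set.image (· * y) {g : G | g ∉ centralizer (V : Set G) ∧ g ^ 2 = z} =
      {g | g ∉ centralizer (V : Set G) ∧ g ^ 2 = 1} := by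
    have y_mem := le_centralizer_of_isKleinFour hzy.y_mem
    have y_inv : y⁻¹ = y :=
      inv_eq_of_mul_eq_one_left (sq y ▸ sq_eq_one_of_mem_isKleinFour hzy.y_mem)
    rw [Set.image_mul_right, y_inv]
    ext g
    simp only [Set.mem_preimage, Set.mem_ofPred_eq, Subgroup.mul_mem_cancel_right _ y_mem]
    exact and_congr_right fun hg => by rw [hzy.mul_sq hg, mul_eq_right]
  rw [union_eq, Set.ncard_union_eq disjoint, ← image_eq,
    Set.ncard_image_of_injective _ (mul_left_injective y), two_mul]

theorem four_dvd_ncard_sq_eq (h2 : IsPGroup 2 G) (hzy : IsCentralBasis V z y)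
    (hV : ¬centralizer (V : Set G) ≤ V) :
    4 ∣ {g : G | g ∉ centralizer (V : Set G) ∧ g ^ 2 = z}.ncard := by
  obtain ⟨W, hWC, hW_card, hW⟩ :=
    exists_card_eq_mul_card_of_not_le h2 le_centralizer_of_isKleinFour hV
  have card_dvd : Nat.card W ∣ {g : G | g ∉ centralizer (V : Set G) ∧ g ^ 2 ∈ V}.ncard :=
    card_dvd_ncard_of_mul_mem W fun g hg w hw =>
      ⟨mt (Subgroup.mul_mem_cancel_right _ (hWC hw)).1 hg.1,
        (mul_pow_mem_iff_of_mk_mem_center (hW w hw).1 (hW w hw).2 g).2 hg.2⟩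
  rw [hW_card, IsKleinFour.card_four, hzy.ncard_sq_mem_eq_two_mul_ncard_sq_eq] at card_dvd
  exact Nat.dvd_of_mul_dvd_mul_left two_pos card_dvd

theorem four_dvd_ncard_orderOf_eq_four (h2 : IsPGroup 2 G) (hzy : IsCentralBasis V z y)
    (hV : ¬centralizer (V : Set G) ≤ V) : 4 ∣ {g : G | orderOf g = 4}.ncard := by
  have union_eq : {g : G | orderOf g = 4} =
      {g | orderOf g = 4 ∧ (g ∈ centralizer (V : Set G) ∨ g ^ 2 ∉ V)} ∪
        {g | g ∉ centralizer (V : Set G) ∧ g ^ 2 = z} := by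
    ext g
    simp only [Set.mem_union, Set.mem_ofPred_eq]
    constructor
    · intro g_order
      by_cases hg : g ∉ centralizer (V : Set G) ∧ g ^ 2 ∈ V
      · refine .inr ⟨hg.1, (hzy.sq_eq_one_or_eq hg.1 hg.2).resolve_left ?_⟩
        exact pow_ne_one_of_lt_orderOf two_ne_zero (by omega)
      · exact .inl ⟨g_order, by tauto⟩
    · rintro (hg | ⟨-, hg⟩)
      · exact hg.1
      · refine orderOf_eq_prime_pow (p := 2) (n := 1) (by simpa [hg] using hzy.z_ne_one) ?_
        rw [pow_succ, pow_mul, pow_one, hg, sq_eq_one_of_mem_isKleinFour hzy.z_mem]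
  have disjoint : Disjoint {g : G | orderOf g = 4 ∧ (g ∈ centralizer (V : Set G) ∨ g ^ 2 ∉ V)}
      {g | g ∉ centralizer (V : Set G) ∧ g ^ 2 = z} :=
    Set.disjoint_left.2 fun g hg hg' =>
      hg.2.elim hg'.1 fun h => h (hg'.2 ▸ hzy.z_mem)
  rw [union_eq, Set.ncard_union_eq disjoint]
  exact dvd_add hzy.four_dvd_ncard_orderOf_eq_four_and (hzy.four_dvd_ncard_sq_eq h2 hV)

end IsCentralBasis

theorem nonempty_mulEquiv_dihedralGroup_four_of_odd [Finite G] (V : Subgroup G) [V.Normal]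
    [IsKleinFour V] (h2 : IsPGroup 2 G)
    (hodd : Odd (Nat.card {H : Subgroup G // IsCyclic H ∧ Nat.card H = 4})) :
    Nonempty (G ≃* DihedralGroup 4) := by
  obtain ⟨z, y, hzy⟩ := exists_isCentralBasis (V := V) h2
  have ncard_eq : {g : G | orderOf g = 4}.ncard =
      2 * Nat.card {H : Subgroup G // IsCyclic H ∧ Nat.card H = 4} :=
    card_orderOf_eq_totient_mul_card_cyclic 4
  have hV : centralizer (V : Set G) ≤ V := by
    by_contra hV
    have four_dvd := hzy.four_dvd_ncard_orderOf_eq_four h2 hV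
    rw [ncard_eq] at four_dvd
    exact Nat.not_even_iff_odd.2 hodd
      (even_iff_two_dvd.2 (Nat.dvd_of_mul_dvd_mul_left two_pos four_dvd))
  obtain ⟨r, hr⟩ : {g : G | orderOf g = 4}.Nonempty := by
    refine Set.nonempty_of_ncard_ne_zero ?_
    rw [ncard_eq]
    exact mul_ne_zero two_ne_zero hodd.pos.ne'
  exact hzy.nonempty_mulEquiv_dihedralGroup_four hV hr

end CountingOrderFour

theorem stmt_14 (G : Type*) [Group G] [Finite G]
    (h2 : IsPGroup 2 G)
    (hodd : Odd (Nat.card {H : Subgroup G // IsCyclic H ∧ Nat.card H = 4})) :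
    IsCyclic G ∨
    (∃ m : ℕ, Nonempty (G ≃* DihedralGroup m)) ∨
    (∃ m : ℕ, Nonempty (G ≃* QuaternionGroup (2 ^ m))) ∨
    (∃ m : ℕ, Nonempty (G ≃* SemidihedralGroup m)) := by
  by_cases hV : ∃ V : Subgroup G, V.Normal ∧ IsKleinFour V
  · obtain ⟨V, _, _⟩ := hV
    exact .inr (.inl ⟨4, nonempty_mulEquiv_dihedralGroup_four_of_odd V h2 hodd⟩)
  · exact cyclic_or_dihedral_or_quaternion_or_semidihedral h2 hV
end
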